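/- arXiv:1910.09825 — 2 statements merged into one kernel-verified Lean document; each statement's English description precedes it below -/
import Mathlib

section
/- Let q be a power of a prime p with p ∉ {2, 3, 5, 23}, q ≡ 1 (mod 4), and q > 2.4·10⁶. Then there exists a ∈ F_q such that a ≠ −1, 0, 1, the elements a, a+1, a³−a−1 are squares in F_q, and the elements a−1, a²+1, a²−a−1, a²+a+1, a²+a−1 are non-squares in F_q. -/
namespace WeilSum
open Polynomial



lemma coeff_eval_X_pow {K : Type*} [Field K] (r : ℕ) (W : K[X][X])
    (hW : ∀ j, (W.coeff j).natDegree < r) (j i : ℕ) (hi : i < r) :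
    (W.eval (X ^ r)).coeff (j * r + i) = (W.coeff j).coeff i := by
  rw [eval_eq_sum_range, finsetSum_coeff]
  rw [Finset.sum_eq_single j]
  · rw [← pow_mul, coeff_mul_X_pow', if_pos (by nlinarith)]
    congr 1
    rw [mul_comm r j]; omega
  · intro b _ hb
    rw [← pow_mul, coeff_mul_X_pow']
    split_ifs with h
    · apply coeff_eq_zero_of_natDegree_lt
      refine lt_of_lt_of_le (hW b) ?_
      rcases lt_or_gt_of_ne hb with h1 | h1
      · have : r * b + r ≤ j * r := by nlinarith
        omega
      · exfalso
        have : j * r + r ≤ r * b := by nlinarith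
        omega
    · rfl
  · intro hj
    have : W.coeff j = 0 := by
      apply coeff_eq_zero_of_natDegree_lt
      simp only [Finset.mem_range, not_lt] at hj
      omega
    simp [this]

lemma eval_X_pow_inj {K : Type*} [Field K] (r : ℕ) (W : K[X][X])
    (hW : ∀ j, (W.coeff j).natDegree < r) (h : W.eval (X ^ r) = 0) : W = 0 := by
  ext j i
  rcases lt_or_ge i r with hi | hi
  · rw [← coeff_eval_X_pow r W hW j i hi, h]; simp
  · rw [coeff_eq_zero_of_natDegree_lt (lt_of_lt_of_le (hW j) hi)]; simp

lemma bideg_mul {K : Type*} [Field K] {a b : K[X][X]} {k l : ℕ}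
    (ha : ∀ j, (a.coeff j).natDegree ≤ k) (hb : ∀ j, (b.coeff j).natDegree ≤ l) (j : ℕ) :
    ((a * b).coeff j).natDegree ≤ k + l := by
  rw [coeff_mul]
  apply natDegree_sum_le_of_forall_le
  intro x _
  exact natDegree_mul_le.trans (add_le_add (ha _) (hb _))

lemma no_square {K : Type*} [Field K] {f a b : K[X]} (hsq : Squarefree f)
    (hd : 1 ≤ f.natDegree) (h : a ^ 2 = f * b ^ 2) : b = 0 := by
  by_contra hb
  have hnu : ¬ IsUnit f := fun hu => by
    have := natDegree_eq_zero_of_isUnit hu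
    omega
  have hf0 : f ≠ 0 := hsq.ne_zero
  obtain ⟨π, hπ, hdvd⟩ := WfDvdMonoid.exists_irreducible_factor hnu hf0
  have hp : Prime π := hπ.prime
  have ha : a ≠ 0 := by
    rintro rfl
    have : f * b ^ 2 = 0 := by rw [← h]; simp
    simp [hf0, hb] at this
  have h1 : emultiplicity π f = 1 := by
    apply le_antisymm
    · have := (squarefree_iff_emultiplicity_le_one f).1 hsq π
      exact this.resolve_right hπ.not_isUnit
    · have := (pow_dvd_iff_le_emultiplicity (a := π) (b := f) (k := 1)).1 (by simpa using hdvd)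
      simpa using this
  have h2 := congrArg (emultiplicity π) h
  rw [emultiplicity_mul hp, emultiplicity_pow hp, emultiplicity_pow hp, h1] at h2
  have fa : FiniteMultiplicity π a := FiniteMultiplicity.of_not_isUnit hπ.not_isUnit ha
  have fb : FiniteMultiplicity π b := FiniteMultiplicity.of_not_isUnit hπ.not_isUnit hb
  rw [fa.emultiplicity_eq_multiplicity, fb.emultiplicity_eq_multiplicity] at h2
  have h3 : 2 * multiplicity π a = 1 + 2 * multiplicity π b := by exact_mod_cast h2
  omega

lemma nonvanish {K : Type*} [Field K] (p s : ℕ) [Fact p.Prime] [CharP K p]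
    (f : K[X]) (hf : f.Monic) (hsq : Squarefree f) (hd : 1 ≤ f.natDegree) (m k l : ℕ)
    (hm : 2 * m = p ^ s + 1) (hk : 2 * k < p ^ s) (hl : f.natDegree + 2 * l < p ^ s)
    (a e : K[X][X]) (ha : ∀ j, (a.coeff j).natDegree ≤ k) (he : ∀ j, (e.coeff j).natDegree ≤ l)
    (h : a.eval (X ^ (p ^ s)) + f ^ m * e.eval (X ^ (p ^ s)) = 0) : a = 0 ∧ e = 0 := by
  set G : K[X][X] := (f.map (iterateFrobenius K p s)).map C with hG
  have hGe : G.eval (X ^ (p ^ s)) = f ^ (p ^ s) := by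
    rw [hG, eval_map, ← map_iterateFrobenius_expand p f s, map_expand, coe_expand]
  have hGm : G.Monic := (hf.map _).map _
  have hW : a ^ 2 - C f * G * e ^ 2 = 0 := by
    apply eval_X_pow_inj (p ^ s)
    · intro j
      rw [coeff_sub]
      refine lt_of_le_of_lt (natDegree_sub_le _ _) (max_lt ?_ ?_)
      · rw [pow_two]
        exact lt_of_le_of_lt (bideg_mul ha ha j) (by omega)
      · rw [pow_two]
        have h1 : ∀ j, ((C f : K[X][X]).coeff j).natDegree ≤ f.natDegree := by
          intro j; rw [coeff_C]; split_ifs <;> simp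
        have h2 : ∀ j, (G.coeff j).natDegree ≤ 0 := by
          intro j; rw [hG, coeff_map]; simp
        exact lt_of_le_of_lt (bideg_mul (bideg_mul h1 h2) (bideg_mul he he) j) (by omega)
    · have h1 : a.eval (X ^ (p ^ s)) = - (f ^ m * e.eval (X ^ (p ^ s))) := eq_neg_of_add_eq_zero_left h
      simp only [eval_sub, eval_mul, eval_pow, eval_C, hGe, h1]
      have : f ^ (2 * m) = f * f ^ (p ^ s) := by rw [hm]; ring
      calc _ = (f ^ (2 * m) - f * f ^ (p ^ s)) * (e.eval (X ^ (p ^ s))) ^ 2 := by ring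
        _ = 0 := by rw [this]; ring
  have hW' : a ^ 2 = C f * G * e ^ 2 := sub_eq_zero.1 hW
  have he0 : e = 0 := by
    have := congrArg leadingCoeff hW'
    simp only [leadingCoeff_mul, leadingCoeff_pow, leadingCoeff_C, hGm.leadingCoeff, mul_one] at this
    exact leadingCoeff_eq_zero.1 (no_square hsq hd this)
  refine ⟨?_, he0⟩
  rw [he0] at hW'
  simpa using hW'

lemma stepanov_count {K : Type*} [Field K] [Fintype K] [DecidableEq K] (p s : ℕ) [Fact p.Prime]
    [CharP K p] (t : ℕ) (hr : p ^ s = 2 * t + 1) (hcard : Fintype.card K = (p ^ s) ^ 2)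
    (f : K[X]) (hf : f.Monic) (hsq : Squarefree f) (hd : 1 ≤ f.natDegree)
    (ht : f.natDegree < t) (ε : K) :
    (Finset.univ.filter (fun x : K => f.eval x ^ (Fintype.card K / 2) = ε)).card
      ≤ (t + 1 + 2 * f.natDegree) * p ^ s := by
  set d := f.natDegree with hdd
  set r := p ^ s with hrr
  let J := t + 1 + d
  let ι := (Fin J × Fin t) ⊕ (Fin J × Fin (t - d))
  let v : ι → K[X] := Sum.elim (fun x => X ^ ((x.1 : ℕ) + x.2 * r))
    (fun x => C ε * f ^ (t + 1) * X ^ ((x.1 : ℕ) + x.2 * r))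
  let w : ι → K[X] := Sum.elim (fun x => X ^ ((x.1 : ℕ) * r + x.2))
    (fun x => f ^ (t + 1) * X ^ ((x.1 : ℕ) * r + x.2))
  have hvmem : ∀ i, v i ∈ degreeLT K (2 * t ^ 2 + d) := by
    intro i
    rw [mem_degreeLT]
    have hlt : (v i).natDegree < 2 * t ^ 2 + d := by
      rcases i with ⟨j, i⟩ | ⟨j, i⟩
      · simp only [v, Sum.elim_inl, natDegree_X_pow]
        have h1 : (i : ℕ) + 1 ≤ t := i.2
        have h2 : (j : ℕ) ≤ t + d := by have : (j : ℕ) < J := j.2; omega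
        have h3 : ((i : ℕ) + 1) * r ≤ t * r := Nat.mul_le_mul_right _ h1
        rw [hr] at h3 ⊢
        nlinarith
      · simp only [v, Sum.elim_inr]
        have h1 : (i : ℕ) + 1 + d ≤ t := by have := i.2; omega
        have h2 : (j : ℕ) ≤ t + d := by have : (j : ℕ) < J := j.2; omega
        have h3 : ((i : ℕ) + 1 + d) * r ≤ t * r := Nat.mul_le_mul_right _ h1
        have h4 : (C ε * f ^ (t + 1) * X ^ ((j : ℕ) + i * r)).natDegree
            ≤ (t + 1) * d + (j + i * r) := by
          refine natDegree_mul_le.trans ?_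
          rw [natDegree_X_pow]
          gcongr
          refine (natDegree_C_mul_le _ _).trans ?_
          exact natDegree_pow_le
        refine lt_of_le_of_lt h4 ?_
        rw [hr] at h3 ⊢
        nlinarith
    exact lt_of_le_of_lt degree_le_natDegree (by exact_mod_cast hlt)
  have hdep : ∃ g : ι → K, ∑ i, g i • v i = 0 ∧ ∃ i, g i ≠ 0 := by
    let v' : ι → degreeLT K (2 * t ^ 2 + d) := fun i => ⟨v i, hvmem i⟩
    have hnl : ¬ LinearIndependent K v' := by
      intro hli
      have := hli.fintype_card_le_finrank
      rw [LinearEquiv.finrank_eq (degreeLTEquiv K (2 * t ^ 2 + d))] at this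
      simp only [ι, J, Fintype.card_sum, Fintype.card_prod, Fintype.card_fin,
        Module.finrank_fintype_fun_eq_card] at this
      obtain ⟨u, hu⟩ := Nat.exists_eq_add_of_lt ht
      have h5 : t - d = u + 1 := by omega
      rw [h5] at this
      subst hu
      nlinarith
    obtain ⟨g, hg, hg'⟩ := Fintype.not_linearIndependent_iff.1 hnl
    refine ⟨g, ?_, hg'⟩
    have := congrArg (Submodule.subtype _) hg
    simpa [v'] using this
  obtain ⟨g, hg, i0, hi0⟩ := hdep
  set U : K[X] := ∑ i, C (g i ^ r) * w i with hU
  have hpow : ∀ x : K, (x ^ r) ^ r = x := by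
    intro x
    rw [← pow_mul, ← pow_two, ← hcard, FiniteField.pow_card]
  have hc2 : (t + 1) * r = Fintype.card K / 2 + (t + 1) := by
    rw [hcard, hr]
    have : (2 * t + 1) ^ 2 = 2 * (2 * t ^ 2 + 2 * t) + 1 := by ring
    rw [this]
    have : (2 * (2 * t ^ 2 + 2 * t) + 1) / 2 = 2 * t ^ 2 + 2 * t := by omega
    rw [this]; ring
  have hroot : ∀ x : K, f.eval x ^ (Fintype.card K / 2) = ε → U.eval x = 0 := by
    intro x hx
    have h1 : (U.eval x) ^ r = 0 := by
      rw [hU, eval_finsetSum, hrr, sum_pow_char_pow]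
      have h2 := congrArg (eval x) hg
      rw [eval_finsetSum, eval_zero] at h2
      rw [← h2]
      apply Finset.sum_congr rfl
      intro i _
      rw [← hrr, eval_mul, eval_C, eval_smul, smul_eq_mul, mul_pow, hpow]
      congr 1
      rcases i with ⟨j, i⟩ | ⟨j, i⟩
      · simp only [v, w, Sum.elim_inl, eval_pow, eval_X]
        rw [pow_add, mul_pow, pow_mul, hpow, pow_add, pow_mul]
      · simp only [v, w, Sum.elim_inr, eval_pow, eval_X, eval_mul, eval_C]
        have h3 : (x ^ ((j : ℕ) * r + i)) ^ r = x ^ ((j : ℕ) + i * r) := by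
          rw [pow_add, mul_pow, pow_mul, hpow, pow_add, pow_mul]
        rw [mul_pow, h3, ← pow_mul, hc2, pow_add, hx]
    exact pow_eq_zero_iff (by omega : r ≠ 0) |>.1 h1
  have hUdeg : U.natDegree ≤ (t + 1 + 2 * d) * r := by
    rw [hU]
    apply natDegree_sum_le_of_forall_le
    intro i _
    refine (natDegree_C_mul_le _ _).trans ?_
    rcases i with ⟨j, i⟩ | ⟨j, i⟩
    · simp only [w, Sum.elim_inl, natDegree_X_pow]
      have h1 : (i : ℕ) + 1 ≤ t := i.2
      have h2 : (j : ℕ) + 1 ≤ t + 1 + d := j.2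
      have h3 : ((j : ℕ) + 1) * r ≤ (t + 1 + d) * r := Nat.mul_le_mul_right _ h2
      nlinarith
    · simp only [w, Sum.elim_inr]
      have h1 : (i : ℕ) + 1 + d ≤ t := by have := i.2; omega
      have h2 : (j : ℕ) + 1 ≤ t + 1 + d := j.2
      have h3 : ((j : ℕ) + 1) * r ≤ (t + 1 + d) * r := Nat.mul_le_mul_right _ h2
      have h4 : (f ^ (t + 1) * X ^ ((j : ℕ) * r + i)).natDegree
            ≤ (t + 1) * d + (j * r + i) := by
        refine natDegree_mul_le.trans ?_
        rw [natDegree_X_pow]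
        gcongr
        exact natDegree_pow_le
      refine h4.trans ?_
      nlinarith
  have hU0 : U ≠ 0 := by
    intro h0
    let a : K[X][X] := ∑ x : Fin J × Fin t, monomial (x.1 : ℕ) (monomial (x.2 : ℕ) (g (Sum.inl x) ^ r))
    let e : K[X][X] := ∑ x : Fin J × Fin (t - d),
      monomial (x.1 : ℕ) (monomial (x.2 : ℕ) (g (Sum.inr x) ^ r))
    have hab := nonvanish p s f hf hsq hd (t + 1) (t - 1) (t - d - 1) (by omega) (by omega)
      (by omega) a e ?_ ?_ ?_
    · obtain ⟨ha, he⟩ := hab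
      have key : ∀ (N : ℕ) (c : Fin J × Fin N → K), (∑ x : Fin J × Fin N,
          monomial (x.1 : ℕ) (monomial (x.2 : ℕ) (c x ^ r)) : K[X][X]) = 0 → ∀ x, c x = 0 := by
        intro N c hc x
        have h1 := congrArg (fun P : K[X][X] => (P.coeff x.1).coeff x.2) hc
        simp only [finsetSum_coeff, coeff_zero] at h1
        rw [Finset.sum_eq_single x] at h1
        · simp only [coeff_monomial, if_true] at h1
          exact pow_eq_zero_iff (by omega : r ≠ 0) |>.1 h1
        · intro y _ hy
          rw [coeff_monomial]
          split_ifs with h2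
          · rw [coeff_monomial, if_neg]
            intro h3
            exact hy (Prod.ext (Fin.ext h2) (Fin.ext h3))
          · simp
        · simp
      rcases i0 with x | x
      · exact hi0 (key _ (fun x => g (Sum.inl x)) ha x)
      · exact hi0 (key _ (fun x => g (Sum.inr x)) he x)
    · intro j
      simp only [a, finsetSum_coeff]
      apply natDegree_sum_le_of_forall_le
      intro x _
      rw [coeff_monomial]
      split_ifs
      · exact (natDegree_monomial_le _).trans (by have := x.2.2; omega)
      · simp
    · intro j
      simp only [e, finsetSum_coeff]
      apply natDegree_sum_le_of_forall_le
      intro x _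
      rw [coeff_monomial]
      split_ifs
      · exact (natDegree_monomial_le _).trans (by have := x.2.2; omega)
      · simp
    · rw [← h0, hU, Fintype.sum_sum_type]
      congr 1
      · simp only [a, eval_finsetSum, eval_monomial, w, Sum.elim_inl]
        apply Finset.sum_congr rfl
        intro x _
        rw [← C_mul_X_pow_eq_monomial, ← hrr]; ring
      · simp only [e, eval_finsetSum, eval_monomial, w, Sum.elim_inr, Finset.mul_sum]
        apply Finset.sum_congr rfl
        intro x _
        rw [← C_mul_X_pow_eq_monomial, ← hrr]; ring
  calc _ ≤ U.roots.toFinset.card := by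
        apply Finset.card_le_card
        intro x hx
        simp only [Finset.mem_filter, Finset.mem_univ, true_and] at hx
        rw [Multiset.mem_toFinset, mem_roots hU0]
        exact hroot x hx
    _ ≤ U.natDegree := (Multiset.toFinset_card_le _).trans (card_roots' _)
    _ ≤ _ := hUdeg

lemma stepanov_bound {K : Type*} [Field K] [Fintype K] [DecidableEq K] (p s : ℕ) [Fact p.Prime]
    [CharP K p] (hp2 : p ≠ 2) (hcard : Fintype.card K = (p ^ s) ^ 2)
    (f : K[X]) (hf : f.Monic) (hsq : Squarefree f) (hd : 1 ≤ f.natDegree)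
    (hbig : 2 * f.natDegree + 1 < p ^ s) :
    |∑ x : K, quadraticChar K (f.eval x)| ≤ (5 * f.natDegree + 1) * (p ^ s : ℤ) := by
  have hodd : Odd (p ^ s) := ((Fact.out : p.Prime).odd_of_ne_two hp2).pow
  obtain ⟨t, ht⟩ := hodd
  have h1 := stepanov_count p s t ht hcard f hf hsq hd (by omega) 1
  have h2 := stepanov_count p s t ht hcard f hf hsq hd (by omega) (-1)
  have hchar : ringChar K ≠ 2 := by rw [ringChar.eq K p]; exact hp2
  set Np := (Finset.univ.filter (fun x : K => f.eval x ^ (Fintype.card K / 2) = 1)) with hNp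
  set Nm := (Finset.univ.filter (fun x : K => f.eval x ^ (Fintype.card K / 2) = -1)) with hNm
  have h0 : (Finset.univ.filter (fun x : K => f.eval x = 0)).card ≤ f.natDegree := by
    calc _ ≤ f.roots.toFinset.card := by
          apply Finset.card_le_card
          intro x hx
          simp only [Finset.mem_filter, Finset.mem_univ, true_and] at hx
          rw [Multiset.mem_toFinset, mem_roots hf.ne_zero]
          exact hx
      _ ≤ f.natDegree := (Multiset.toFinset_card_le _).trans (card_roots' _)
  have hne : (1 : K) ≠ -1 := Ne.symm (Ring.neg_one_ne_one_of_char_ne_two hchar)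
  have hc0 : Fintype.card K / 2 ≠ 0 := by
    rw [hcard]
    have : 3 ≤ p ^ s := by omega
    have : 9 ≤ (p ^ s) ^ 2 := by nlinarith
    omega
  have hS : ∑ x : K, quadraticChar K (f.eval x) = (Np.card : ℤ) - Nm.card := by
    rw [Finset.card_filter, Finset.card_filter]
    push_cast
    rw [← Finset.sum_sub_distrib]
    apply Finset.sum_congr rfl
    intro x _
    by_cases hx : f.eval x = 0
    · simp [hx, hc0, zero_pow]
    · rw [quadraticChar_eq_pow_of_char_ne_two hchar hx]
      rcases FiniteField.pow_dichotomy hchar hx with h | h <;> simp [h, hne, hne.symm]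
  have hT : (Fintype.card K : ℤ) ≤ Np.card + Nm.card + f.natDegree := by
    have : (Fintype.card K) ≤ Np.card + Nm.card +
        (Finset.univ.filter (fun x : K => f.eval x = 0)).card := by
      rw [← Finset.card_univ]
      refine le_trans (Finset.card_le_card (t := (Np ∪ Nm) ∪
        (Finset.univ.filter (fun x : K => f.eval x = 0))) ?_) ?_
      · intro x _
        simp only [Finset.mem_union, hNp, hNm, Finset.mem_filter, Finset.mem_univ, true_and]
        by_cases hx : f.eval x = 0
        · exact Or.inr hx
        · exact Or.inl (FiniteField.pow_dichotomy hchar hx)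
      · exact (Finset.card_union_le _ _).trans (Nat.add_le_add_right (Finset.card_union_le _ _) _)
    omega
  rw [hS, abs_le]
  have ht' : (p ^ s : ℤ) = 2 * t + 1 := by exact_mod_cast ht
  rw [hcard] at hT
  push_cast at hT
  rw [ht] at h1 h2
  rw [ht'] at hT ⊢
  have h1' : (Np.card : ℤ) ≤ (t + 1 + 2 * f.natDegree) * (2 * t + 1) := by exact_mod_cast h1
  have h2' : (Nm.card : ℤ) ≤ (t + 1 + 2 * f.natDegree) * (2 * t + 1) := by exact_mod_cast h2
  have hdn : (0 : ℤ) ≤ f.natDegree := by positivity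
  have htn : (0 : ℤ) ≤ t := by positivity
  constructor <;> nlinarith



lemma root_bound {N : ℕ} (ω : Fin N → ℂ) (Cc R : ℝ) (hR : 0 < R) (n0 : ℕ)
    (h : ∀ n, n0 ≤ n → ‖∑ i, ω i ^ n‖ ≤ Cc * R ^ n) (i : Fin N) : ‖ω i‖ ≤ R := by
  classical
  set g : ℂ[X] := ∏ z ∈ (Finset.univ.image ω).erase (ω i), (X - C z) with hg
  have hgi : g.eval (ω i) ≠ 0 := by
    rw [hg, eval_prod, Finset.prod_ne_zero_iff]
    intro z hz
    simp only [eval_sub, eval_X, eval_C]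
    exact sub_ne_zero.2 (Finset.ne_of_mem_erase hz).symm
  have hgj : ∀ j, ω j ≠ ω i → g.eval (ω j) = 0 := by
    intro j hj
    rw [hg, eval_prod]
    apply Finset.prod_eq_zero (i := ω j)
    · exact Finset.mem_erase.2 ⟨hj, Finset.mem_image_of_mem _ (Finset.mem_univ _)⟩
    · simp
  set m := (Finset.univ.filter (fun j => ω j = ω i)).card with hm
  have hm1 : 1 ≤ m := Finset.card_pos.2 ⟨i, by simp⟩
  have key : ∀ n, (m : ℂ) * (g.eval (ω i) * ω i ^ n)
      = ∑ k ∈ Finset.range (g.natDegree + 1), g.coeff k * ∑ j, ω j ^ (n + k) := by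
    intro n
    have h1 : ∑ j, g.eval (ω j) * ω j ^ n = (m : ℂ) * (g.eval (ω i) * ω i ^ n) := by
      rw [hm, Finset.card_filter, Nat.cast_sum, Finset.sum_mul]
      apply Finset.sum_congr rfl
      intro j _
      by_cases hj : ω j = ω i
      · simp [hj]
      · simp [hj, hgj j hj]
    rw [← h1]
    simp_rw [eval_eq_sum_range, Finset.sum_mul, Finset.mul_sum]
    rw [Finset.sum_comm]
    apply Finset.sum_congr rfl
    intro k _
    apply Finset.sum_congr rfl
    intro j _
    rw [pow_add]; ring
  set D := ∑ k ∈ Finset.range (g.natDegree + 1), ‖g.coeff k‖ * (Cc * R ^ k) with hD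
  have hb : ∀ n, n0 ≤ n → ‖g.eval (ω i)‖ * ‖ω i‖ ^ n ≤ D * R ^ n := by
    intro n hn
    have h2 : ‖(m : ℂ) * (g.eval (ω i) * ω i ^ n)‖ ≤ D * R ^ n := by
      rw [key n, hD, Finset.sum_mul]
      refine (norm_sum_le _ _).trans (Finset.sum_le_sum ?_)
      intro k _
      rw [norm_mul]
      calc _ ≤ ‖g.coeff k‖ * (Cc * R ^ (n + k)) := by
            gcongr
            exact h _ (by omega)
        _ = _ := by rw [pow_add]; ring
    rw [norm_mul, norm_mul, norm_pow, Complex.norm_natCast] at h2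
    have h3 : (1 : ℝ) ≤ m := by exact_mod_cast hm1
    have h4 : 0 ≤ ‖g.eval (ω i)‖ * ‖ω i‖ ^ n := by positivity
    nlinarith
  by_contra hcon
  push Not at hcon
  have hgt : 1 < ‖ω i‖ / R := (one_lt_div hR).2 hcon
  have hgp : 0 < ‖g.eval (ω i)‖ := norm_pos_iff.2 hgi
  have ht := tendsto_pow_atTop_atTop_of_one_lt hgt
  obtain ⟨n, hn1, hn2⟩ := ((ht.eventually_gt_atTop (D / ‖g.eval (ω i)‖)).and
    (Filter.eventually_ge_atTop n0)).exists
  have h5 := hb n hn2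
  rw [div_pow, div_lt_div_iff₀ hgp (by positivity)] at hn1
  nlinarith

lemma newton_roots (d : ℕ) (hd : 1 ≤ d) (A S : ℕ → ℤ) (hA0 : A 0 = 1) (hA : ∀ n, d ≤ n → A n = 0)
    (hrec : ∀ n : ℕ, 1 ≤ n → (n : ℤ) * A n
      = ∑ a ∈ Finset.HasAntidiagonal.antidiagonal n with a.1 < n, A a.1 * S a.2) :
    ∃ ω : Fin (d - 1) → ℂ, ∀ n, 1 ≤ n → (S n : ℂ) = - ∑ i, ω i ^ n := by
  classical
  set N := d - 1 with hN
  set B : ℂ[X] := ∑ k ∈ Finset.range (N + 1), C (A k : ℂ) * X ^ (N - k) with hB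
  have hcoeff : ∀ k, k ≤ N → B.coeff (N - k) = A k := by
    intro k hk
    rw [hB, finsetSum_coeff, Finset.sum_eq_single k]
    · simp
    · intro b hb hbk
      rw [coeff_C_mul_X_pow, if_neg]
      have := Finset.mem_range.1 hb
      omega
    · intro h; exact absurd (Finset.mem_range.2 (by omega)) h
  have hdeg : B.natDegree ≤ N := by
    rw [hB]
    apply natDegree_sum_le_of_forall_le
    intro k _
    exact (natDegree_C_mul_X_pow_le _ _).trans (by omega)
  have hBN : B.coeff N = 1 := by
    have := hcoeff 0 (by omega)
    simpa [hA0] using this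
  have hmonic : B.Monic := monic_of_natDegree_le_of_coeff_eq_one N hdeg hBN
  have hdeg' : B.natDegree = N := le_antisymm hdeg (le_natDegree_of_ne_zero (by rw [hBN]; simp))
  have hsplit := IsAlgClosed.splits B
  have hcard : B.roots.card = N := by rw [← hsplit.natDegree_eq_card_roots, hdeg']
  let l := B.roots.toList
  have hl : l.length = N := by simp [l, hcard]
  let ω : Fin N → ℂ := fun i => l.get (i.cast hl.symm)
  have hω : (Finset.univ.val.map ω) = B.roots := by
    have h1 : List.ofFn ω = l := by
      apply List.ext_get
      · simp [hl]
      · intro n h1 h2; simp [ω]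
    have h2 : (Finset.univ.val.map ω) = (List.ofFn ω : Multiset ℂ) := by
      simp [Fin.univ_val_map]
    rw [h2, h1]; simp [l]
  have he : ∀ k, MvPolynomial.aeval ω (MvPolynomial.esymm (Fin N) ℂ k) = (-1) ^ k * (A k : ℂ) := by
    intro k
    rw [MvPolynomial.aeval_esymm_eq_multiset_esymm, hω]
    rcases le_or_gt k N with hk | hk
    · have := Polynomial.coeff_eq_esymm_roots_of_card (p := B) (by rw [hcard, hdeg']) (k := N - k)
        (by omega)
      rw [hcoeff k hk, hdeg', hmonic.leadingCoeff] at this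
      have h3 : N - (N - k) = k := by omega
      rw [h3] at this
      rw [this, one_mul, ← mul_assoc, ← mul_pow]; simp
    · rw [hA k (by omega)]
      rw [Multiset.esymm, Multiset.powersetCard_eq_empty _ (by omega)]
      simp
  refine ⟨ω, ?_⟩
  have hps : ∀ n : ℕ, MvPolynomial.aeval ω (MvPolynomial.psum (Fin N) ℂ n) = ∑ i, ω i ^ n := by
    intro n; simp [MvPolynomial.psum]
  have hnewt : ∀ n : ℕ, (n : ℂ) * A n
      = - ∑ a ∈ Finset.HasAntidiagonal.antidiagonal n with a.1 < n, (A a.1 : ℂ) * ∑ i, ω i ^ a.2 := by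
    intro n
    have h1 := congrArg (MvPolynomial.aeval ω) (MvPolynomial.mul_esymm_eq_sum (Fin N) ℂ n)
    simp only [map_mul, map_natCast, map_pow, map_neg, map_one, map_sum, he, hps] at h1
    have hs : ∀ k, ((-1 : ℂ) ^ k) * (-1) ^ k = 1 := by intro k; rw [← mul_pow]; simp
    have h2 : (n : ℂ) * A n = (-1) ^ n * ((n : ℂ) * ((-1) ^ n * A n)) := by
      linear_combination (-(n : ℂ) * A n) * hs n
    rw [h2, h1, pow_succ, ← mul_assoc, ← mul_assoc, hs]
    simp only [one_mul, neg_mul]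
    congr 1
    apply Finset.sum_congr rfl
    intro a _
    rw [← mul_assoc, hs, one_mul]
  intro n
  induction n using Nat.strong_induction_on with
  | _ n ih =>
    intro hn
    have h1 := hnewt n
    have h2 : (n : ℂ) * A n
      = ∑ a ∈ Finset.HasAntidiagonal.antidiagonal n with a.1 < n, (A a.1 : ℂ) * S a.2 := by
      exact_mod_cast congrArg (Int.cast : ℤ → ℂ) (hrec n hn)
    have hmem : ((0, n) : ℕ × ℕ) ∈ (Finset.HasAntidiagonal.antidiagonal n).filter (fun a => a.1 < n) := by
      simp; omega
    rw [h1, ← Finset.add_sum_erase _ _ hmem, ← Finset.add_sum_erase _ _ hmem, neg_add] at h2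
    have h3 : ∑ x ∈ ((Finset.HasAntidiagonal.antidiagonal n).filter (fun a => a.1 < n)).erase (0, n),
        (A x.1 : ℂ) * S x.2 = - ∑ x ∈ ((Finset.HasAntidiagonal.antidiagonal n).filter (fun a => a.1 < n)).erase (0, n),
        (A x.1 : ℂ) * ∑ i, ω i ^ x.2 := by
      rw [← Finset.sum_neg_distrib]
      apply Finset.sum_congr rfl
      intro x hx
      simp only [Finset.mem_erase, Finset.mem_filter, Finset.HasAntidiagonal.mem_antidiagonal] at hx
      obtain ⟨hx1, hx2, hx3⟩ := hx
      have hx0 : x.1 ≠ 0 := by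
        intro h0
        apply hx1
        ext <;> simp <;> omega
      rw [ih x.2 (by omega) (by omega)]; ring
    rw [h3] at h2
    simp only [hA0, Int.cast_one, one_mul] at h2
    linear_combination -h2

section Res
variable {F : Type*} [Field F]

lemma res_eq (f g : F[X]) (hf : f.Monic) :
    algebraMap F (AlgebraicClosure F) (resultant f g) =
      ((f.map (algebraMap F (AlgebraicClosure F))).roots.map
        (fun α => (g.map (algebraMap F (AlgebraicClosure F))).eval α)).prod := by
  have h := resultant_eq_prod_eval (f.map (algebraMap F (AlgebraicClosure F)))
    (g.map (algebraMap F (AlgebraicClosure F))) g.natDegree (natDegree_map_le)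
    (IsAlgClosed.splits _)
  rw [natDegree_map, resultant_map_map, (hf.map _).leadingCoeff, one_pow, one_mul] at h
  exact h

lemma res_one (f : F[X]) (hf : f.Monic) : resultant f 1 = 1 := by
  apply (algebraMap F (AlgebraicClosure F)).injective
  rw [res_eq f _ hf]; simp

lemma res_mul (f g h : F[X]) (hf : f.Monic) :
    resultant f (g * h) = resultant f g * resultant f h := by
  apply (algebraMap F (AlgebraicClosure F)).injective
  rw [map_mul, res_eq f _ hf, res_eq f _ hf, res_eq f _ hf, ← Multiset.prod_map_mul]
  simp

lemma res_pow (f g : F[X]) (hf : f.Monic) (n : ℕ) :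
    resultant f (g ^ n) = resultant f g ^ n := by
  induction n with
  | zero => simp
  | succ n ih => rw [pow_succ, res_mul _ _ _ hf, ih, pow_succ]

lemma res_add (f k h : F[X]) (hf : f.Monic) :
    resultant f (f * k + h) = resultant f h := by
  apply (algebraMap F (AlgebraicClosure F)).injective
  rw [res_eq f _ hf, res_eq f _ hf]
  congr 1
  apply Multiset.map_congr rfl
  intro α hα
  have : (f.map (algebraMap F (AlgebraicClosure F))).eval α = 0 := (mem_roots'.1 hα).2
  simp only [Polynomial.map_add, Polynomial.map_mul, eval_add, eval_mul, this]
  simp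

lemma norm_gen_eq_res {L : Type*} [Field L] [Algebra F L] [FiniteDimensional F L]
    [Algebra.IsSeparable F L] (pb : PowerBasis F L) (f : F[X]) :
    Algebra.norm F (aeval pb.gen f) = resultant (minpoly F pb.gen) f := by
  classical
  apply (algebraMap F (AlgebraicClosure F)).injective
  have hIntg : IsIntegral F pb.gen := Algebra.IsIntegral.isIntegral _
  rw [res_eq _ _ (minpoly.monic hIntg), Algebra.norm_eq_prod_embeddings]
  rw [Fintype.prod_equiv (pb.liftEquiv' : (L →ₐ[F] AlgebraicClosure F) ≃ _)
    (fun σ => σ (aeval pb.gen f)) 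
    (fun x => (f.map (algebraMap F (AlgebraicClosure F))).eval x.1) ?_]
  · rw [Finset.prod_mem_multiset _ _ 
      (fun x => (f.map (algebraMap F (AlgebraicClosure F))).eval x), 
      Finset.prod_eq_multiset_prod, Multiset.toFinset_val, Multiset.dedup_eq_self.mpr]
    · exact nodup_roots (.map (Algebra.IsSeparable.isSeparable F pb.gen))
    · intro x; rfl
  · intro σ
    simp [PowerBasis.liftEquiv'_apply_coe, aeval_def, eval_map]

noncomputable def cpoly (F : Type*) [Field F] {K : Type*} [Field K] [Algebra F K] (β : K) : F[X] :=
  (minpoly F β) ^ (Module.finrank F K / (minpoly F β).natDegree)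

variable {K : Type*} [Field K] [Algebra F K] [FiniteDimensional F K]

lemma cpoly_monic (β : K) : (cpoly F β).Monic :=
  (minpoly.monic (Algebra.IsIntegral.isIntegral _)).pow _

lemma cpoly_natDegree (β : K) : (cpoly F β).natDegree = Module.finrank F K := by
  unfold cpoly
  rw [natDegree_pow, Nat.div_mul_cancel (minpoly.degree_dvd (Algebra.IsIntegral.isIntegral _))]

open IntermediateField in
lemma norm_eq_res_cpoly [Algebra.IsSeparable F K] (β : K) (f : F[X]) :
    Algebra.norm F (aeval β f) = resultant (minpoly F β) f ^
      (Module.finrank F K / (minpoly F β).natDegree) := by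
  have hIntg : IsIntegral F β := Algebra.IsIntegral.isIntegral _
  have h1 := norm_gen_eq_res (adjoin.powerBasis hIntg) f
  rw [adjoin.powerBasis_gen hIntg, minpoly_gen] at h1
  have h2 : aeval β f = algebraMap F⟮β⟯ K (aeval (AdjoinSimple.gen F β) f) := by
    rw [← aeval_algebraMap_apply, AdjoinSimple.algebraMap_gen]
  rw [h2, ← Algebra.norm_norm (S := F⟮β⟯), Algebra.norm_algebraMap, map_pow, h1]
  congr 1
  rw [← Module.finrank_mul_finrank F F⟮β⟯ K, adjoin.finrank hIntg, Nat.mul_div_cancel_left]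
  exact minpoly.natDegree_pos hIntg
end Res

section Chi
variable {F : Type*} [Field F] [Fintype F] [DecidableEq F]

lemma chi_norm (hF : ringChar F ≠ 2) {K : Type*} [Field K] [Fintype K] [DecidableEq K] [Algebra F K] (x : K) :
    quadraticChar F (Algebra.norm F x) = quadraticChar K x := by
  have hK : ringChar K ≠ 2 := by
    rwa [← Algebra.ringChar_eq F K]
  by_cases hx : x = 0
  · subst hx; simp
  have hn : Algebra.norm F x ≠ 0 := by simpa using hx
  have e3 : (x : K) ^ (Fintype.card K / 2) = algebraMap F K ((Algebra.norm F x) ^ (Fintype.card F / 2)) := by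
    rw [map_pow, FiniteField.algebraMap_norm_eq_pow, ← pow_mul]
    congr 1
    obtain ⟨k, hk⟩ : (Nat.card F - 1) ∣ (Nat.card K - 1) := by
      rw [Module.natCard_eq_pow_finrank (K := F) (V := K)]
      simpa using Nat.sub_dvd_pow_sub_pow (Nat.card F) 1 (Module.finrank F K)
    have o1 := FiniteField.odd_card_of_char_ne_two hF
    have o2 := FiniteField.odd_card_of_char_ne_two hK
    simp only [Nat.card_eq_fintype_card] at *
    have c1 : 1 < Fintype.card F := Fintype.one_lt_card
    obtain ⟨a, ha⟩ : ∃ a, Fintype.card F = 2 * a + 1 := ⟨Fintype.card F / 2, by omega⟩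
    obtain ⟨b, hb⟩ : ∃ b, Fintype.card K = 2 * b + 1 := ⟨Fintype.card K / 2, by omega⟩
    rw [hk, Nat.mul_div_cancel_left _ (by omega)]
    rw [ha, hb] at hk ⊢
    have : b = a * k := by
      have : 2 * b = 2 * (a * k) := by rw [← mul_assoc]; simpa using hk
      omega
    have h1 : (2 * a + 1) / 2 = a := by omega
    have h2 : (2 * b + 1) / 2 = b := by omega
    rw [h1, h2, this, mul_comm]
  rw [quadraticChar_eq_pow_of_char_ne_two hF hn, quadraticChar_eq_pow_of_char_ne_two hK hx, e3]
  simp only [map_eq_one_iff _ (algebraMap F K).injective]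

noncomputable def XX (f g : F[X]) : ℤ := quadraticChar F (resultant f g)

lemma XX_mul (f g h : F[X]) (hf : f.Monic) : XX f (g * h) = XX f g * XX f h := by
  unfold XX; rw [res_mul _ _ _ hf, map_mul]

lemma XX_one (f : F[X]) (hf : f.Monic) : XX f 1 = 1 := by
  unfold XX; rw [res_one _ hf, map_one]

lemma XX_add (f k h : F[X]) (hf : f.Monic) : XX f (f * k + h) = XX f h := by
  unfold XX; rw [res_add _ _ _ hf]

lemma XX_cpoly (hF : ringChar F ≠ 2) (hm : IsSquare (-1 : F)) (f : F[X]) (hf : f.Monic)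
    {K : Type*} [Field K] [Fintype K] [DecidableEq K] [Algebra F K] (β : K) :
    XX f (cpoly F β) = quadraticChar K (aeval β f) := by
  rw [← chi_norm hF, norm_eq_res_cpoly]
  unfold XX cpoly
  rw [res_pow _ _ hf, map_pow, map_pow, resultant_comm, map_mul, map_pow,
    (quadraticChar_one_iff_isSquare (by simp)).2 hm, one_pow, one_mul]

lemma XX_dich (f g : F[X]) : XX f g = 0 ∨ XX f g = 1 ∨ XX f g = -1 := by
  unfold XX
  by_cases h : resultant f g = 0
  · left; rw [h]; simp
  · right; exact quadraticChar_dichotomy h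
end Chi

section Count
open UniqueFactorizationMonoid
variable {F : Type*} [Field F] [Fintype F] [DecidableEq F]

open Classical in
lemma card_minpoly_eq {K : Type*} [Field K] [Fintype K] [Algebra F K] (P : F[X])
    (hP : Irreducible P) (hm : P.Monic) :
    (Finset.univ.filter (fun β : K => minpoly F β = P)).card =
      if P.natDegree ∣ Module.finrank F K then P.natDegree else 0 := by
  have hKcard : Fintype.card K = Nat.card F ^ Module.finrank F K := by
    rw [← Nat.card_eq_fintype_card, Module.natCard_eq_pow_finrank (K := F) (V := K)]
  split_ifs with h
  · have hdvd := (hP.natDegree_dvd_iff_dvd_X_pow_card_pow_sub_X).1 h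
    rw [← hKcard] at hdvd
    have hs : (P.map (algebraMap F K)).Splits := by
      refine Splits.of_dvd (IsSplittingField.splits (L := K) (X ^ Fintype.card K - X : F[X])) ?_
        (Polynomial.map_dvd _ hdvd)
      exact Polynomial.map_ne_zero (FiniteField.X_pow_card_sub_X_ne_zero _ Fintype.one_lt_card)
    have hsep : P.Separable := PerfectField.separable_of_irreducible hP
    rw [← card_rootSet_eq_natDegree hsep hs, ← Set.toFinset_card]
    congr 1
    ext β
    simp only [Finset.mem_filter, Finset.mem_univ, true_and, Set.mem_toFinset,
      mem_rootSet, ne_eq, hm.ne_zero, not_false_eq_true]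
    constructor
    · intro h; rw [← h]; exact minpoly.aeval _ _
    · intro h; exact (minpoly.eq_of_irreducible_of_monic hP h hm).symm
  · rw [Finset.card_eq_zero, Finset.filter_eq_empty_iff]
    rintro β - rfl
    exact h (minpoly.degree_dvd (Algebra.IsIntegral.isIntegral _))

open Classical in
lemma card_cpoly_dvd {K : Type*} [Field K] [Fintype K] [Algebra F K] (g : F[X])
    (hg : g.Monic) :
    (Finset.univ.filter (fun β : K => cpoly F β ∣ g)).card =
      ∑ P ∈ (normalizedFactors g).toFinset,
        if P.natDegree ∣ Module.finrank F K ∧ P ^ (Module.finrank F K / P.natDegree) ∣ g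
          then P.natDegree else 0 := by
  rw [Finset.card_eq_sum_card_fiberwise (f := fun β => minpoly F β)
    (t := (normalizedFactors g).toFinset)]
  · apply Finset.sum_congr rfl
    intro P hP
    rw [Multiset.mem_toFinset, Polynomial.mem_normalizedFactors_iff hg.ne_zero] at hP
    by_cases h : P ^ (Module.finrank F K / P.natDegree) ∣ g
    · simp only [h, and_true]
      rw [← card_minpoly_eq (K := K) P hP.1 hP.2.1]
      congr 1
      ext β
      simp only [Finset.mem_filter, Finset.mem_univ, true_and, and_iff_right_iff_imp]
      rintro rfl
      exact h
    · simp only [h, and_false, if_false]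
      rw [Finset.card_eq_zero, Finset.filter_eq_empty_iff]
      rintro β hβ rfl
      exact h (Finset.mem_filter.1 hβ).2
  · intro β hβ
    have hβ := (Finset.mem_filter.1 hβ).2
    have hIntg : IsIntegral F β := Algebra.IsIntegral.isIntegral _
    simp only [Multiset.mem_toFinset, Finset.mem_coe]
    rw [Polynomial.mem_normalizedFactors_iff hg.ne_zero]
    refine ⟨minpoly.irreducible hIntg, minpoly.monic hIntg, dvd_trans (dvd_pow_self _ ?_) hβ⟩
    have h1 := minpoly.degree_dvd hIntg (K := F)
    have h2 := Nat.le_of_dvd Module.finrank_pos h1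
    have := Nat.div_pos h2 (minpoly.natDegree_pos hIntg)
    omega

open Classical in
lemma sum_count (g : F[X]) (hg : g.Monic) :
    ∑ m ∈ Finset.Icc 1 g.natDegree, (∑ P ∈ (normalizedFactors g).toFinset,
        if P.natDegree ∣ m ∧ P ^ (m / P.natDegree) ∣ g
          then P.natDegree else 0) = g.natDegree := by
  have hprod : (normalizedFactors g).prod = g := by
    rw [prod_normalizedFactors_eq, hg.normalize_eq_self]
    exact hg.ne_zero
  have hmon : ∀ P ∈ normalizedFactors g, P.Monic := fun P hP =>
    ((Polynomial.mem_normalizedFactors_iff hg.ne_zero).1 hP).2.1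
  have hdeg : g.natDegree = ∑ P ∈ (normalizedFactors g).toFinset,
      (normalizedFactors g).count P * P.natDegree := by
    conv_lhs => rw [← hprod]
    rw [natDegree_multiset_prod_of_monic _ hmon, Finset.sum_multiset_map_count]
    simp
  rw [Finset.sum_comm]
  conv_rhs => rw [hdeg]
  apply Finset.sum_congr rfl
  intro P hP
  have hle : (normalizedFactors g).count P * P.natDegree ≤ g.natDegree := by
    rw [hdeg]
    exact Finset.single_le_sum (f := fun P => (normalizedFactors g).count P * P.natDegree)
      (fun _ _ => Nat.zero_le _) hP
  rw [Multiset.mem_toFinset, Polynomial.mem_normalizedFactors_iff hg.ne_zero] at hP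
  have hpos : 0 < P.natDegree := hP.1.natDegree_pos
  rw [← Finset.sum_filter, Finset.sum_const, smul_eq_mul]
  congr 1
  have hiff : ∀ k, P ^ k ∣ g ↔ k ≤ (normalizedFactors g).count P := by
    intro k
    rw [pow_dvd_iff_le_emultiplicity, emultiplicity_eq_count_normalizedFactors hP.1 hg.ne_zero,
      hP.2.1.normalize_eq_self]
    simp
  have : (Finset.Icc 1 g.natDegree).filter (fun m => P.natDegree ∣ m ∧ P ^ (m / P.natDegree) ∣ g)
      = (Finset.Icc 1 ((normalizedFactors g).count P)).image (fun k => k * P.natDegree) := by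
    ext m
    simp only [Finset.mem_filter, Finset.mem_Icc, Finset.mem_image, hiff]
    constructor
    · rintro ⟨⟨h1, h2⟩, ⟨k, rfl⟩, h4⟩
      rw [Nat.mul_div_cancel_left _ hpos] at h4
      refine ⟨k, ⟨?_, h4⟩, mul_comm _ _⟩
      rcases Nat.eq_zero_or_pos k with rfl | h
      · simp at h1
      · exact h
    · rintro ⟨k, ⟨h1, h2⟩, rfl⟩
      refine ⟨⟨Nat.mul_pos h1 hpos, (Nat.mul_le_mul_right _ h2).trans hle⟩, dvd_mul_left _ _, ?_⟩
      rwa [Nat.mul_div_cancel _ hpos]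
  rw [this, Finset.card_image_of_injective]
  · simp
  · intro a b h
    exact Nat.eq_of_mul_eq_mul_right hpos h
end Count

section Euler
open UniqueFactorizationMonoid
variable {F : Type*} [Field F] [Fintype F]

lemma finite_lt (n : ℕ) : {g : F[X] | g.degree < n}.Finite := by
  have : Finite (degreeLT F n) := Finite.of_equiv _ (degreeLTEquiv F n).symm.toEquiv
  have h : {g : F[X] | g.degree < n} = (degreeLT F n : Set F[X]) := by
    ext g; simp [mem_degreeLT]
  rw [h]
  exact Set.toFinite _

lemma finite_monics (n : ℕ) : {g : F[X] | g.Monic ∧ g.natDegree = n}.Finite := by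
  refine (finite_lt (F := F) (n + 1)).subset ?_
  rintro g ⟨h1, h2⟩
  simp only [Set.mem_ofPred_eq]
  rw [degree_eq_natDegree h1.ne_zero, h2]
  exact_mod_cast Nat.lt_succ_self n

noncomputable def lts (F : Type*) [Field F] [Fintype F] (n : ℕ) : Finset F[X] :=
  (finite_lt (F := F) n).toFinset

noncomputable def monics (F : Type*) [Field F] [Fintype F] (n : ℕ) : Finset F[X] :=
  (finite_monics (F := F) n).toFinset

lemma mem_lts {n : ℕ} {g : F[X]} : g ∈ lts F n ↔ g.degree < n := by simp [lts]

lemma mem_monics {n : ℕ} {g : F[X]} : g ∈ monics F n ↔ g.Monic ∧ g.natDegree = n := by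
  simp [monics]

variable [DecidableEq F]

noncomputable def Acoef (f : F[X]) (n : ℕ) : ℤ := ∑ g ∈ monics F n, XX f g

lemma Acoef_zero (f : F[X]) (hf : f.Monic) : Acoef f 0 = 1 := by
  have : monics F 0 = {1} := by
    ext g
    rw [mem_monics, Finset.mem_singleton]
    constructor
    · rintro ⟨h1, h2⟩; exact eq_one_of_monic_natDegree_zero h1 h2
    · rintro rfl; simp
  rw [Acoef, this, Finset.sum_singleton, XX_one _ hf]

open Classical in
lemma sum_dvd (f c : F[X]) (hf : f.Monic) (hc : c.Monic) (n : ℕ) (hn : c.natDegree ≤ n) :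
    ∑ g ∈ monics F n with c ∣ g, XX f g = XX f c * Acoef f (n - c.natDegree) := by
  rw [Acoef, Finset.mul_sum]
  symm
  refine Finset.sum_bij (fun k _ => c * k) ?_ ?_ ?_ ?_
  · intro k hk
    rw [mem_monics] at hk
    rw [Finset.mem_filter, mem_monics]
    refine ⟨⟨hc.mul hk.1, ?_⟩, dvd_mul_right _ _⟩
    rw [hc.natDegree_mul hk.1, hk.2]; omega
  · intro a _ b _ h
    exact mul_left_cancel₀ hc.ne_zero h
  · intro g hg
    rw [Finset.mem_filter, mem_monics] at hg
    obtain ⟨⟨h1, h2⟩, k, rfl⟩ := hg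
    have hk : k.Monic := hc.of_mul_monic_left h1
    refine ⟨k, ?_, rfl⟩
    rw [mem_monics]
    rw [hc.natDegree_mul hk] at h2
    exact ⟨hk, by omega⟩
  · intro k _
    rw [XX_mul _ _ _ hf]

noncomputable def NN (g : F[X]) (m : ℕ) : ℕ := by
  classical
  exact ∑ P ∈ (normalizedFactors g).toFinset,
        if P.natDegree ∣ m ∧ P ^ (m / P.natDegree) ∣ g then P.natDegree else 0

lemma sum_NN (hF : ringChar F ≠ 2) (hm : IsSquare (-1 : F)) (f : F[X]) (hf : f.Monic)
    {K : Type*} [Field K] [Fintype K] [DecidableEq K] [Algebra F K] (n : ℕ)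
    (hn : Module.finrank F K ≤ n) :
    ∑ g ∈ monics F n, (NN g (Module.finrank F K) : ℤ) * XX f g =
      (∑ β : K, quadraticChar K (aeval β f)) * Acoef f (n - Module.finrank F K) := by
  classical
  have h1 : ∀ g ∈ monics F n, (NN g (Module.finrank F K) : ℤ) * XX f g =
      ∑ β : K, if cpoly F β ∣ g then XX f g else 0 := by
    intro g hg
    rw [← Finset.sum_filter, Finset.sum_const, nsmul_eq_mul, card_cpoly_dvd g (mem_monics.1 hg).1]
    rfl
  rw [Finset.sum_congr rfl h1, Finset.sum_comm, Finset.sum_mul]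
  apply Finset.sum_congr rfl
  intro β _
  rw [← Finset.sum_filter, sum_dvd f _ hf (cpoly_monic β) n (by rwa [cpoly_natDegree]),
    XX_cpoly hF hm f hf, cpoly_natDegree]

/-- The character sums over the extensions of `F`. -/
noncomputable def Sseq (p : ℕ) [Fact p.Prime] [CharP F p] (f : F[X]) : ℕ → ℤ
  | 0 => 0
  | (m + 1) => by
    classical
    exact letI := Fintype.ofFinite (FiniteField.Extension F p (m + 1))
      ∑ β : FiniteField.Extension F p (m + 1),
        quadraticChar (FiniteField.Extension F p (m + 1)) (aeval β f)

lemma recur (p : ℕ) [Fact p.Prime] [CharP F p] (hF : ringChar F ≠ 2) (hm : IsSquare (-1 : F))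
    (f : F[X]) (hf : f.Monic) (n : ℕ) :
    (n : ℤ) * Acoef f n = ∑ m ∈ Finset.Icc 1 n, Sseq p f m * Acoef f (n - m) := by
  classical
  have h1 : ∀ m ∈ Finset.Icc 1 n, Sseq p f m * Acoef f (n - m) =
      ∑ g ∈ monics F n, (NN g m : ℤ) * XX f g := by
    intro m hm'
    rw [Finset.mem_Icc] at hm'
    obtain ⟨k, rfl⟩ : ∃ k, m = k + 1 := ⟨m - 1, by omega⟩
    let := Fintype.ofFinite (FiniteField.Extension F p (k + 1))
    have h := sum_NN hF hm f hf (K := FiniteField.Extension F p (k + 1)) n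
      (by rw [FiniteField.finrank_extension]; exact hm'.2)
    rw [FiniteField.finrank_extension] at h
    rw [h]
    rfl
  rw [Finset.sum_congr rfl h1, Finset.sum_comm, Acoef, Finset.mul_sum]
  apply Finset.sum_congr rfl
  intro g hg
  rw [← Finset.sum_mul]
  congr 1
  have hg' := mem_monics.1 hg
  have := sum_count g hg'.1
  rw [hg'.2] at this
  rw [← Nat.cast_sum]
  exact_mod_cast this.symm

lemma recur' (p : ℕ) [Fact p.Prime] [CharP F p] (hF : ringChar F ≠ 2) (hm : IsSquare (-1 : F))
    (f : F[X]) (hf : f.Monic) (n : ℕ) :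
    (n : ℤ) * Acoef f n = ∑ a ∈ Finset.HasAntidiagonal.antidiagonal n with a.1 < n,
      Acoef f a.1 * Sseq p f a.2 := by
  rw [recur p hF hm f hf n]
  refine Finset.sum_bij (fun m _ => (n - m, m)) ?_ ?_ ?_ ?_
  · intro m hm
    rw [Finset.mem_Icc] at hm
    simp; omega
  · intro a _ b _ h
    simpa using (Prod.mk.inj h).2
  · rintro ⟨a, b⟩ h
    simp at h
    refine ⟨b, ?_, ?_⟩
    · rw [Finset.mem_Icc]; omega
    · ext <;> simp; omega
  · intro m _
    exact mul_comm _ _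

lemma sum_lts_zero (f g : F[X]) (hf : f.Monic) (hg : XX f g = -1) :
    ∑ h ∈ lts F f.natDegree, XX f h = 0 := by
  have hcop : IsCoprime f g := by
    by_contra h
    have : resultant f g = 0 := resultant_eq_zero_iff.2 ⟨Or.inl hf.ne_zero, h⟩
    rw [XX, this] at hg
    simp at hg
  have hmap : ∀ h ∈ lts F f.natDegree, (g * h) %ₘ f ∈ lts F f.natDegree := by
    intro h _
    rw [mem_lts, ← degree_eq_natDegree hf.ne_zero]
    exact degree_modByMonic_lt _ hf
  have hinj : Set.InjOn (fun h => (g * h) %ₘ f) (lts F f.natDegree : Set F[X]) := by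
    intro a ha b hb hab
    rw [Finset.mem_coe, mem_lts, ← degree_eq_natDegree hf.ne_zero] at ha hb
    have h1 : (g * (a - b)) %ₘ f = 0 := by
      rw [mul_sub, sub_modByMonic, sub_eq_zero]; exact hab
    rw [modByMonic_eq_zero_iff_dvd hf] at h1
    have h2 := hcop.dvd_of_dvd_mul_left h1
    have h3 := eq_zero_of_dvd_of_degree_lt h2
      (lt_of_le_of_lt (degree_sub_le _ _) (max_lt ha hb))
    exact sub_eq_zero.1 h3
  have hsurj := Finset.surjOn_of_injOn_of_card_le _ hmap hinj le_rfl
  have h := Finset.sum_nbij (s := lts F f.natDegree) (t := lts F f.natDegree)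
    (f := fun h => - XX f h) (g := fun h => XX f h)
    (fun h => (g * h) %ₘ f) hmap hinj hsurj ?_
  · rw [Finset.sum_neg_distrib] at h
    linarith
  · intro h _
    have e := modByMonic_add_div (g * h) f
    have : XX f (g * h) = XX f ((g * h) %ₘ f) := by
      conv_lhs => rw [← e, add_comm]
      rw [XX_add _ _ _ hf]
    rw [← this, XX_mul _ _ _ hf, hg]; ring

lemma Acoef_vanish (f g : F[X]) (hf : f.Monic) (hg : XX f g = -1) (n : ℕ)
    (hn : f.natDegree ≤ n) : Acoef f n = 0 := by
  have hdf : f.degree = f.natDegree := degree_eq_natDegree hf.ne_zero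
  have h : Acoef f n = ∑ x ∈ monics F (n - f.natDegree) ×ˢ lts F f.natDegree,
      XX f (f * x.1 + x.2) := by
    rw [Acoef]
    symm
    refine Finset.sum_bij' (fun x _ => f * x.1 + x.2) (fun g _ => (g /ₘ f, g %ₘ f)) ?_ ?_ ?_ ?_ ?_
    · rintro ⟨k, h⟩ hx
      rw [Finset.mem_product, mem_monics, mem_lts] at hx
      obtain ⟨⟨h1, h2⟩, h3⟩ := hx
      simp only at h1 h2 h3 ⊢
      have hm : (f * k).Monic := hf.mul h1
      have hd : (f * k).natDegree = n := by rw [hf.natDegree_mul h1, h2]; omega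
      have hlt : h.degree < (f * k).degree := by
        rw [degree_eq_natDegree hm.ne_zero, hd]
        exact lt_of_lt_of_le h3 (by exact_mod_cast hn)
      rw [mem_monics]
      refine ⟨hm.add_of_left hlt, ?_⟩
      rw [natDegree_add_eq_left_of_degree_lt hlt, hd]
    · intro g hg
      rw [mem_monics] at hg
      rw [Finset.mem_product, mem_monics, mem_lts]
      have hle : f.degree ≤ g.degree := by
        rw [hdf, degree_eq_natDegree hg.1.ne_zero, hg.2]; exact_mod_cast hn
      refine ⟨⟨?_, ?_⟩, ?_⟩
      · rw [Monic, leadingCoeff_divByMonic_of_monic hf hle]; exact hg.1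
      · rw [natDegree_divByMonic _ hf, hg.2]
      · rw [← hdf]; exact degree_modByMonic_lt _ hf
    · rintro ⟨k, h⟩ hx
      rw [Finset.mem_product, mem_monics, mem_lts] at hx
      have := div_modByMonic_unique (f := f * k + h) k h hf ⟨add_comm _ _, by rw [hdf]; exact hx.2⟩
      simp only [this.1, this.2]
    · intro g _
      simp only
      rw [add_comm]; exact modByMonic_add_div g f
    · intro _ _; rfl
  rw [h, Finset.sum_product]
  apply Finset.sum_eq_zero
  intro k _
  simp only [XX_add _ _ _ hf]
  exact sum_lts_zero f g hf hg
end Euler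

section Weil
variable {F : Type*} [Field F] [Fintype F] [DecidableEq F]

lemma even_bound (p : ℕ) [Fact p.Prime] [CharP F p] (hp2 : p ≠ 2) (f : F[X]) (hf : f.Monic)
    (hsep : f.Separable) (hd : 1 ≤ f.natDegree) (n : ℕ) (hn : 1 ≤ n)
    (hbig : 2 * f.natDegree + 1 < Fintype.card F ^ n) :
    |Sseq p f (2 * n)| ≤ (5 * f.natDegree + 1) * (Fintype.card F ^ n : ℤ) := by
  classical
  obtain ⟨k, hk⟩ : ∃ k, 2 * n = k + 1 := ⟨2 * n - 1, by omega⟩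
  rw [hk]
  let := Fintype.ofFinite (FiniteField.Extension F p (k + 1))
  have hch : CharP (FiniteField.Extension F p (k + 1)) p :=
    charP_of_injective_algebraMap (algebraMap F _).injective p
  obtain ⟨e, -, he⟩ := FiniteField.card F p
  have hcard : Fintype.card (FiniteField.Extension F p (k + 1)) = (p ^ ((e : ℕ) * n)) ^ 2 := by
    rw [← Nat.card_eq_fintype_card, FiniteField.natCard_extension, Nat.card_eq_fintype_card, he,
      ← hk, ← pow_mul, ← pow_mul]
    congr 1; ring
  have h := stepanov_bound p ((e : ℕ) * n) hp2 hcard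
    (f.map (algebraMap F (FiniteField.Extension F p (k + 1)))) (hf.map _)
    (hsep.map).squarefree (by rwa [natDegree_map])
    (by rw [natDegree_map, pow_mul, ← he]; exact hbig)
  rw [natDegree_map] at h
  have e2 : ((p : ℤ) ^ ((e : ℕ) * n)) = (Fintype.card F : ℤ) ^ n := by
    rw [he]; push_cast; rw [pow_mul]
  rw [e2] at h
  refine le_trans (le_of_eq ?_) h
  congr 1
  simp only [Sseq]
  apply Finset.sum_congr rfl
  intro β _
  rw [eval_map_algebraMap]

lemma exists_neg (p : ℕ) [Fact p.Prime] [CharP F p] (hp2 : p ≠ 2) (hF : ringChar F ≠ 2)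
    (hm : IsSquare (-1 : F)) (f : F[X]) (hf : f.Monic)
    (hsep : f.Separable) (hd : 1 ≤ f.natDegree) : ∃ g, XX f g = -1 := by
  classical
  by_contra hcon
  push Not at hcon
  set d := f.natDegree with hdd
  set n := 6 * d + 2 with hn
  have hq2 : 1 < Fintype.card F := Fintype.one_lt_card
  have hlt : n < Fintype.card F ^ n := Nat.lt_pow_self hq2
  have hE := even_bound p hp2 f hf hsep hd n (by omega) (by omega)
  obtain ⟨k, hk⟩ : ∃ k, 2 * n = k + 1 := ⟨2 * n - 1, by omega⟩
  have hlow : ((Fintype.card F : ℤ) ^ (2 * n)) - d ≤ Sseq p f (2 * n) := by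
    rw [hk]
    let := Fintype.ofFinite (FiniteField.Extension F p (k + 1))
    have hcard : Fintype.card (FiniteField.Extension F p (k + 1)) = Fintype.card F ^ (k + 1) := by
      rw [← Nat.card_eq_fintype_card, FiniteField.natCard_extension, Nat.card_eq_fintype_card]
    have h1 : ∀ β : FiniteField.Extension F p (k + 1),
        (1 : ℤ) - (if aeval β f = 0 then 1 else 0) ≤
          quadraticChar (FiniteField.Extension F p (k + 1)) (aeval β f) := by
      intro β
      have e := XX_cpoly hF hm f hf β
      have ne := hcon (cpoly F β)
      split_ifs with h0
      · rw [h0]; simp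
      · rcases quadraticChar_dichotomy h0 with h | h
        · rw [h]; norm_num
        · exact absurd (e.trans h) ne
    have h2 := Finset.sum_le_sum (s := Finset.univ) (fun β _ => h1 β)
    rw [Finset.sum_sub_distrib, Finset.sum_const, Finset.card_univ, hcard, Finset.sum_boole] at h2
    have h3 : (Finset.univ.filter (fun β : FiniteField.Extension F p (k + 1) =>
        aeval β f = 0)).card ≤ d := by
      rw [hdd, ← natDegree_map (algebraMap F (FiniteField.Extension F p (k + 1)))]
      refine le_trans (Finset.card_le_card ?_)
        ((Multiset.toFinset_card_le _).trans (card_roots' _))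
      intro β hβ
      rw [Multiset.mem_toFinset, mem_roots (hf.map _).ne_zero, IsRoot, eval_map_algebraMap]
      exact (Finset.mem_filter.1 hβ).2
    have h3' : ((Finset.univ.filter (fun β : FiniteField.Extension F p (k + 1) =>
        aeval β f = 0)).card : ℤ) ≤ d := by exact_mod_cast h3
    simp only [Sseq]
    refine le_trans ?_ h2
    simp only [nsmul_eq_mul, mul_one]
    push_cast
    linarith
  have h4 := le_trans hlow ((le_abs_self _).trans hE)
  have h5 : ((6 * d + 2 : ℕ) : ℤ) < (Fintype.card F : ℤ) ^ n := by exact_mod_cast hlt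
  rw [mul_comm 2 n, pow_mul] at h4
  push_cast at h5
  have hd' : (1 : ℤ) ≤ d := by exact_mod_cast hd
  nlinarith

lemma Sseq_one (p : ℕ) [Fact p.Prime] [CharP F p] (hF : ringChar F ≠ 2) (f : F[X]) :
    Sseq p f 1 = ∑ x : F, quadraticChar F (f.eval x) := by
  classical
  let := Fintype.ofFinite (FiniteField.Extension F p (0 + 1))
  have hbij : Function.Bijective (algebraMap F (FiniteField.Extension F p (0 + 1))) := by
    rw [Fintype.bijective_iff_injective_and_card]
    refine ⟨(algebraMap F _).injective, ?_⟩
    rw [← Nat.card_eq_fintype_card, ← Nat.card_eq_fintype_card, FiniteField.natCard_extension]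
    simp
  show Sseq p f (0 + 1) = _
  simp only [Sseq]
  symm
  refine Fintype.sum_bijective _ hbij _ _ ?_
  intro x
  rw [aeval_algebraMap_apply, ← chi_norm hF (K := FiniteField.Extension F p (0 + 1)),
    Algebra.norm_algebraMap, FiniteField.finrank_extension]
  simp [aeval_def]

theorem weil_bound (p : ℕ) [Fact p.Prime] [CharP F p] (hp2 : p ≠ 2)
    (hm : IsSquare (-1 : F)) (f : F[X]) (hf : f.Monic)
    (hsep : f.Separable) (hd : 1 ≤ f.natDegree) :
    |((∑ x : F, quadraticChar F (f.eval x) : ℤ) : ℝ)| ≤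
      ((f.natDegree : ℝ) - 1) * √(Fintype.card F : ℝ) := by
  have hF : ringChar F ≠ 2 := by rwa [ringChar.eq F p]
  obtain ⟨g, hg⟩ := exists_neg p hp2 hF hm f hf hsep hd
  obtain ⟨ω, hω⟩ := newton_roots f.natDegree hd (Acoef f) (Sseq p f) (Acoef_zero f hf)
    (fun n hn => Acoef_vanish f g hf hg n hn) (fun n _ => recur' p hF hm f hf n)
  have hq2 : 1 < Fintype.card F := Fintype.one_lt_card
  have hqpos : (0 : ℝ) < Fintype.card F := by exact_mod_cast (by omega : 0 < Fintype.card F)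
  have hω2 : ∀ i, ‖ω i‖ ≤ √(Fintype.card F : ℝ) := by
    intro i
    have h := root_bound (fun i => ω i ^ 2) (5 * f.natDegree + 1) (Fintype.card F : ℝ) hqpos
      (2 * f.natDegree + 1) ?_ i
    · simp only [norm_pow] at h
      exact Real.le_sqrt_of_sq_le h
    · intro n hn
      have hE := even_bound p hp2 f hf hsep hd n (by omega)
        (lt_of_le_of_lt hn (Nat.lt_pow_self hq2))
      have e : ∑ i, (ω i ^ 2) ^ n = - (Sseq p f (2 * n) : ℂ) := by
        rw [hω (2 * n) (by omega)]
        simp [pow_mul]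
      rw [e, norm_neg]
      rw [Complex.norm_intCast]
      exact_mod_cast hE
  have h1 := hω 1 le_rfl
  rw [Sseq_one p hF] at h1
  have h2 : |((∑ x : F, quadraticChar F (f.eval x) : ℤ) : ℝ)| = ‖∑ i, ω i ^ 1‖ := by
    rw [← Complex.norm_intCast, h1, norm_neg]
  rw [h2]
  refine (norm_sum_le _ _).trans ?_
  simp only [pow_one]
  refine (Finset.sum_le_sum (fun i _ => hω2 i)).trans ?_
  rw [Finset.sum_const, Finset.card_univ, Fintype.card_fin, nsmul_eq_mul, Nat.cast_sub hd]
  simp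
end Weil

section Final
variable {F : Type*} [Field F]

lemma cast_ne_zero' (p : ℕ) (hp : p.Prime) [CharP F p] (hp2 : p ≠ 2) (hp3 : p ≠ 3)
    (hp5 : p ≠ 5) (hp23 : p ≠ 23) (c : ℕ) (hc : c ∣ 690 ^ 3) : (c : F) ≠ 0 := by
  intro h
  rw [CharP.cast_eq_zero_iff F p] at h
  have h1 := hp.dvd_of_dvd_pow (h.trans hc)
  have h2 : p ∣ 2 * (3 * (5 * 23)) := by simpa using h1
  rw [hp.dvd_mul, hp.dvd_mul, hp.dvd_mul] at h2
  rcases h2 with h | h | h | h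
  · exact hp2 ((Nat.prime_dvd_prime_iff_eq hp (by norm_num)).1 h)
  · exact hp3 ((Nat.prime_dvd_prime_iff_eq hp (by norm_num)).1 h)
  · exact hp5 ((Nat.prime_dvd_prime_iff_eq hp (by norm_num)).1 h)
  · exact hp23 ((Nat.prime_dvd_prime_iff_eq hp (by norm_num)).1 h)

lemma cop_of (H : ∀ c : ℕ, c ∣ 690 ^ 3 → (c : F) ≠ 0) {f g : F[X]} (c : ℕ) (u v : F[X])
    (hc : c ∣ 690 ^ 3) (h : u * f + v * g = (c : F[X])) : IsCoprime f g := by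
  have h0 := H c hc
  refine ⟨C (c : F)⁻¹ * u, C (c : F)⁻¹ * v, ?_⟩
  have : C (c : F)⁻¹ * u * f + C (c : F)⁻¹ * v * g = C (c : F)⁻¹ * (u * f + v * g) := by ring
  rw [this, h, ← C_eq_natCast, ← C_mul, inv_mul_cancel₀ h0, C_1]

noncomputable def GG (F : Type*) [Field F] : Fin 8 → F[X] :=
  ![X, X + 1, X ^ 3 - X - 1, X - 1, X ^ 2 + 1, X ^ 2 - X - 1, X ^ 2 + X + 1, X ^ 2 + X - 1]

def dd : Fin 8 → ℕ := ![1, 1, 3, 1, 2, 2, 2, 2]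

def ss : Fin 8 → ℤ := ![1, 1, 1, -1, -1, -1, -1, -1]

lemma GG_monic (i : Fin 8) : (GG F i).Monic ∧ (GG F i).natDegree = dd i := by
  fin_cases i
  · show (X : F[X]).Monic ∧ (X : F[X]).natDegree = 1
    constructor
    · monicity!
    · compute_degree!
  · show (X + 1 : F[X]).Monic ∧ (X + 1 : F[X]).natDegree = 1
    constructor
    · monicity!
    · compute_degree!
  · show (X ^ 3 - X - 1 : F[X]).Monic ∧ (X ^ 3 - X - 1 : F[X]).natDegree = 3
    constructor
    · monicity!
    · compute_degree!
  · show (X - 1 : F[X]).Monic ∧ (X - 1 : F[X]).natDegree = 1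
    constructor
    · monicity!
    · compute_degree!
  · show (X ^ 2 + 1 : F[X]).Monic ∧ (X ^ 2 + 1 : F[X]).natDegree = 2
    constructor
    · monicity!
    · compute_degree!
  · show (X ^ 2 - X - 1 : F[X]).Monic ∧ (X ^ 2 - X - 1 : F[X]).natDegree = 2
    constructor
    · monicity!
    · compute_degree!
  · show (X ^ 2 + X + 1 : F[X]).Monic ∧ (X ^ 2 + X + 1 : F[X]).natDegree = 2
    constructor
    · monicity!
    · compute_degree!
  · show (X ^ 2 + X - 1 : F[X]).Monic ∧ (X ^ 2 + X - 1 : F[X]).natDegree = 2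
    constructor
    · monicity!
    · compute_degree!

lemma GG_sep (H : ∀ c : ℕ, c ∣ 690 ^ 3 → (c : F) ≠ 0) (i : Fin 8) : (GG F i).Separable := by
  fin_cases i
  · show (X : F[X]).Separable
    refine cop_of H 1 (0) ((1)) (by norm_num) ?_
    simp
    try simp only [show (C 2 : F[X]) = 2 from rfl]
    try ring
  · show (X + 1 : F[X]).Separable
    refine cop_of H 1 (0) ((1)) (by norm_num) ?_
    simp
    try simp only [show (C 2 : F[X]) = 2 from rfl]
    try ring
  · show (X ^ 3 - X - 1 : F[X]).Separable
    refine cop_of H 23 ((-27) + (18) * X ^ 1) ((4) + (9) * X ^ 1 + (-6) * X ^ 2) (by norm_num) ?_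
    simp
    try simp only [show (C 2 : F[X]) = 2 from rfl]
    try ring
  · show (X - 1 : F[X]).Separable
    refine cop_of H 1 (0) ((1)) (by norm_num) ?_
    simp
    try simp only [show (C 2 : F[X]) = 2 from rfl]
    try ring
  · show (X ^ 2 + 1 : F[X]).Separable
    refine cop_of H 2 ((2)) ((-1) * X ^ 1) (by norm_num) ?_
    simp
    try simp only [show (C 2 : F[X]) = 2 from rfl]
    try ring
  · show (X ^ 2 - X - 1 : F[X]).Separable
    refine cop_of H 5 ((-4)) ((-1) + (2) * X ^ 1) (by norm_num) ?_
    simp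
    try simp only [show (C 2 : F[X]) = 2 from rfl]
    try ring
  · show (X ^ 2 + X + 1 : F[X]).Separable
    refine cop_of H 3 ((4)) ((-1) + (-2) * X ^ 1) (by norm_num) ?_
    simp
    try simp only [show (C 2 : F[X]) = 2 from rfl]
    try ring
  · show (X ^ 2 + X - 1 : F[X]).Separable
    refine cop_of H 5 ((-4)) ((1) + (2) * X ^ 1) (by norm_num) ?_
    simp
    try simp only [show (C 2 : F[X]) = 2 from rfl]
    try ring

lemma GG_cop (H : ∀ c : ℕ, c ∣ 690 ^ 3 → (c : F) ≠ 0) (i j : Fin 8) (hij : i < j) :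
    IsCoprime (GG F i) (GG F j) := by
  fin_cases i <;> fin_cases j <;> try exact absurd hij (by decide)
  · show IsCoprime (X : F[X]) (X + 1)
    exact cop_of H 1 ((-1)) ((1)) (by norm_num) (by push_cast; ring)
  · show IsCoprime (X : F[X]) (X ^ 3 - X - 1)
    exact cop_of H 1 ((-1) + (1) * X ^ 2) ((-1)) (by norm_num) (by push_cast; ring)
  · show IsCoprime (X : F[X]) (X - 1)
    exact cop_of H 1 ((1)) ((-1)) (by norm_num) (by push_cast; ring)
  · show IsCoprime (X : F[X]) (X ^ 2 + 1)
    exact cop_of H 1 ((-1) * X ^ 1) ((1)) (by norm_num) (by push_cast; ring)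
  · show IsCoprime (X : F[X]) (X ^ 2 - X - 1)
    exact cop_of H 1 ((-1) + (1) * X ^ 1) ((-1)) (by norm_num) (by push_cast; ring)
  · show IsCoprime (X : F[X]) (X ^ 2 + X + 1)
    exact cop_of H 1 ((-1) + (-1) * X ^ 1) ((1)) (by norm_num) (by push_cast; ring)
  · show IsCoprime (X : F[X]) (X ^ 2 + X - 1)
    exact cop_of H 1 ((1) + (1) * X ^ 1) ((-1)) (by norm_num) (by push_cast; ring)
  · show IsCoprime (X + 1 : F[X]) (X ^ 3 - X - 1)
    exact cop_of H 1 ((-1) * X ^ 1 + (1) * X ^ 2) ((-1)) (by norm_num) (by push_cast; ring)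
  · show IsCoprime (X + 1 : F[X]) (X - 1)
    exact cop_of H 2 ((1)) ((-1)) (by norm_num) (by push_cast; ring)
  · show IsCoprime (X + 1 : F[X]) (X ^ 2 + 1)
    exact cop_of H 2 ((1) + (-1) * X ^ 1) ((1)) (by norm_num) (by push_cast; ring)
  · show IsCoprime (X + 1 : F[X]) (X ^ 2 - X - 1)
    exact cop_of H 1 ((2) + (-1) * X ^ 1) ((1)) (by norm_num) (by push_cast; ring)
  · show IsCoprime (X + 1 : F[X]) (X ^ 2 + X + 1)
    exact cop_of H 1 ((-1) * X ^ 1) ((1)) (by norm_num) (by push_cast; ring)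
  · show IsCoprime (X + 1 : F[X]) (X ^ 2 + X - 1)
    exact cop_of H 1 ((1) * X ^ 1) ((-1)) (by norm_num) (by push_cast; ring)
  · show IsCoprime (X ^ 3 - X - 1 : F[X]) (X - 1)
    exact cop_of H 1 ((-1)) ((1) * X ^ 1 + (1) * X ^ 2) (by norm_num) (by push_cast; ring)
  · show IsCoprime (X ^ 3 - X - 1 : F[X]) (X ^ 2 + 1)
    exact cop_of H 5 ((-1) + (2) * X ^ 1) ((4) + (1) * X ^ 1 + (-2) * X ^ 2) (by norm_num) (by push_cast; ring)
  · show IsCoprime (X ^ 3 - X - 1 : F[X]) (X ^ 2 - X - 1)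
    exact cop_of H 1 ((-1) + (1) * X ^ 1) ((-1) * X ^ 2) (by norm_num) (by push_cast; ring)
  · show IsCoprime (X ^ 3 - X - 1 : F[X]) (X ^ 2 + X + 1)
    exact cop_of H 1 ((1) + (1) * X ^ 1) ((2) + (-1) * X ^ 2) (by norm_num) (by push_cast; ring)
  · show IsCoprime (X ^ 3 - X - 1 : F[X]) (X ^ 2 + X - 1)
    exact cop_of H 5 ((-3) + (-1) * X ^ 1) ((-2) + (2) * X ^ 1 + (1) * X ^ 2) (by norm_num) (by push_cast; ring)
  · show IsCoprime (X - 1 : F[X]) (X ^ 2 + 1)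
    exact cop_of H 2 ((-1) + (-1) * X ^ 1) ((1)) (by norm_num) (by push_cast; ring)
  · show IsCoprime (X - 1 : F[X]) (X ^ 2 - X - 1)
    exact cop_of H 1 ((1) * X ^ 1) ((-1)) (by norm_num) (by push_cast; ring)
  · show IsCoprime (X - 1 : F[X]) (X ^ 2 + X + 1)
    exact cop_of H 3 ((-2) + (-1) * X ^ 1) ((1)) (by norm_num) (by push_cast; ring)
  · show IsCoprime (X - 1 : F[X]) (X ^ 2 + X - 1)
    exact cop_of H 1 ((-2) + (-1) * X ^ 1) ((1)) (by norm_num) (by push_cast; ring)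
  · show IsCoprime (X ^ 2 + 1 : F[X]) (X ^ 2 - X - 1)
    exact cop_of H 5 ((3) + (-1) * X ^ 1) ((-2) + (1) * X ^ 1) (by norm_num) (by push_cast; ring)
  · show IsCoprime (X ^ 2 + 1 : F[X]) (X ^ 2 + X + 1)
    exact cop_of H 1 ((1) + (1) * X ^ 1) ((-1) * X ^ 1) (by norm_num) (by push_cast; ring)
  · show IsCoprime (X ^ 2 + 1 : F[X]) (X ^ 2 + X - 1)
    exact cop_of H 5 ((3) + (1) * X ^ 1) ((-2) + (-1) * X ^ 1) (by norm_num) (by push_cast; ring)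
  · show IsCoprime (X ^ 2 - X - 1 : F[X]) (X ^ 2 + X + 1)
    exact cop_of H 2 ((1) * X ^ 1) ((2) + (-1) * X ^ 1) (by norm_num) (by push_cast; ring)
  · show IsCoprime (X ^ 2 - X - 1 : F[X]) (X ^ 2 + X - 1)
    exact cop_of H 2 ((-1) + (-1) * X ^ 1) ((-1) + (1) * X ^ 1) (by norm_num) (by push_cast; ring)
  · show IsCoprime (X ^ 2 + X + 1 : F[X]) (X ^ 2 + X - 1)
    exact cop_of H 2 ((1)) ((-1)) (by norm_num) (by push_cast; ring)
end Final

section Final2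
variable {F : Type*} [Field F] [Fintype F] [DecidableEq F]

lemma expand (G : Fin 8 → F[X]) (s : Fin 8 → ℤ) :
    ∑ a : F, ∏ i, (1 + s i * quadraticChar F ((G i).eval a)) =
      ∑ T ∈ (Finset.univ : Finset (Fin 8)).powerset, (∏ i ∈ T, s i) *
        ∑ a : F, quadraticChar F ((∏ i ∈ T, G i).eval a) := by
  simp only [Finset.prod_one_add]
  rw [Finset.sum_comm]
  apply Finset.sum_congr rfl
  intro T _
  rw [Finset.mul_sum]
  apply Finset.sum_congr rfl
  intro a _
  rw [Finset.prod_mul_distrib, eval_prod, map_prod]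

lemma ss_prod (T : Finset (Fin 8)) : |((∏ i ∈ T, ss i : ℤ) : ℝ)| = 1 := by
  rw [Int.cast_prod, Finset.abs_prod]
  apply Finset.prod_eq_one
  intro i _
  fin_cases i <;> simp [ss]

lemma sum_deg : ∑ T ∈ (Finset.univ : Finset (Fin 8)).powerset.erase ∅,
    (((∑ i ∈ T, dd i : ℕ) : ℤ) - 1) = 1537 := by
  decide +kernel

lemma lower (p : ℕ) [Fact p.Prime] [CharP F p] (hp2 : p ≠ 2)
    (H : ∀ c : ℕ, c ∣ 690 ^ 3 → (c : F) ≠ 0) (hm : IsSquare (-1 : F)) :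
    (Fintype.card F : ℝ) - 1537 * √(Fintype.card F : ℝ) ≤
      ((∑ a : F, ∏ i, (1 + ss i * quadraticChar F ((GG F i).eval a)) : ℤ) : ℝ) := by
  classical
  rw [expand, ← Finset.add_sum_erase _ _ (Finset.empty_mem_powerset Finset.univ)]
  have hpair : ∀ i j : Fin 8, i ≠ j → IsCoprime (GG F i) (GG F j) := by
    intro i j hij
    rcases lt_or_gt_of_ne hij with h | h
    · exact GG_cop H i j h
    · exact (GG_cop H j i h).symm
  have hT : ∀ T ∈ (Finset.univ : Finset (Fin 8)).powerset.erase ∅,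
      -(((((∑ i ∈ T, dd i : ℕ) : ℤ) - 1 : ℤ) : ℝ) * √(Fintype.card F : ℝ)) ≤
      (((∏ i ∈ T, ss i) * ∑ a : F, quadraticChar F ((∏ i ∈ T, GG F i).eval a) : ℤ) : ℝ) := by
    intro T hT
    have hmon : (∏ i ∈ T, GG F i).Monic := monic_prod_of_monic _ _ fun i _ => (GG_monic i).1
    have hdeg : (∏ i ∈ T, GG F i).natDegree = ∑ i ∈ T, dd i := by
      rw [natDegree_prod_of_monic _ _ fun i _ => (GG_monic i).1]
      exact Finset.sum_congr rfl fun i _ => (GG_monic i).2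
    have hsep : (∏ i ∈ T, GG F i).Separable :=
      separable_prod' (fun i _ j _ hij => hpair i j hij) (fun i _ => GG_sep H i)
    have hdd : ∀ i, 1 ≤ dd i := by decide
    have hpos : 1 ≤ ∑ i ∈ T, dd i := by
      obtain ⟨i, hi⟩ := Finset.nonempty_of_ne_empty (Finset.mem_erase.1 hT).1
      exact (hdd i).trans (Finset.single_le_sum (fun _ _ => Nat.zero_le _) hi)
    have hW := weil_bound p hp2 hm _ hmon hsep (by rw [hdeg]; exact hpos)
    rw [hdeg] at hW
    refine neg_le_of_abs_le ?_
    rw [Int.cast_mul, abs_mul, ss_prod, one_mul]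
    refine hW.trans (le_of_eq ?_)
    push_cast
    rfl
  have hsum := Finset.sum_le_sum hT
  rw [Finset.sum_neg_distrib, ← Finset.sum_mul, ← Int.cast_sum, sum_deg, ← Int.cast_sum] at hsum
  rw [Int.cast_add]
  have h0 : (((∏ i ∈ (∅ : Finset (Fin 8)), ss i) *
      ∑ a : F, quadraticChar F ((∏ i ∈ (∅ : Finset (Fin 8)), GG F i).eval a) : ℤ) : ℝ)
      = Fintype.card F := by
    simp
  rw [h0]
  push_cast at hsum ⊢
  linarith

lemma upper (hno : ∀ a : F, ∃ i, quadraticChar F ((GG F i).eval a) ≠ ss i) :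
    ∑ a : F, ∏ i, (1 + ss i * quadraticChar F ((GG F i).eval a)) ≤ 3584 := by
  classical
  have hss : ∀ i, ss i = 1 ∨ ss i = -1 := by decide
  have h1 : ∀ a : F, ∏ i, (1 + ss i * quadraticChar F ((GG F i).eval a)) ≤
      256 * (if (∏ i, GG F i).eval a = 0 then 1 else 0) := by
    intro a
    have hdich : ∀ i, quadraticChar F ((GG F i).eval a) = 0 ∨
        quadraticChar F ((GG F i).eval a) = 1 ∨ quadraticChar F ((GG F i).eval a) = -1 := by
      intro i
      by_cases h : (GG F i).eval a = 0
      · left; rw [h]; simp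
      · right; exact quadraticChar_dichotomy h
    split_ifs with h
    · calc ∏ i, (1 + ss i * quadraticChar F ((GG F i).eval a)) ≤ ∏ _i : Fin 8, (2 : ℤ) := by
            apply Finset.prod_le_prod
            · intro i _
              rcases hss i with e | e <;> rcases hdich i with e' | e' | e' <;> rw [e, e'] <;> norm_num
            · intro i _
              rcases hss i with e | e <;> rcases hdich i with e' | e' | e' <;> rw [e, e'] <;> norm_num
        _ ≤ 256 * 1 := by simp
    · obtain ⟨i, hi⟩ := hno a
      rw [eval_prod, Finset.prod_eq_zero_iff] at h
      push Not at h
      have hne := h i (Finset.mem_univ _)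
      rw [mul_zero]
      apply le_of_eq
      apply Finset.prod_eq_zero (Finset.mem_univ i)
      rcases quadraticChar_dichotomy hne with e' | e' <;> rcases hss i with e | e <;>
        first | exact absurd (e'.trans e.symm) hi | (rw [e, e']; norm_num)
  refine (Finset.sum_le_sum fun a _ => h1 a).trans ?_
  rw [← Finset.mul_sum, Finset.sum_boole]
  have hmon : (∏ i, GG F i).Monic := monic_prod_of_monic _ _ fun i _ => (GG_monic i).1
  have hdeg : (∏ i, GG F i).natDegree = 14 := by
    rw [natDegree_prod_of_monic _ _ fun i _ => (GG_monic i).1]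
    rw [Finset.sum_congr rfl fun i _ => (GG_monic (F := F) i).2]
    decide
  have h3 : (Finset.univ.filter (fun a : F => (∏ i, GG F i).eval a = 0)).card ≤ 14 := by
    rw [← hdeg]
    refine le_trans (Finset.card_le_card ?_)
        ((Multiset.toFinset_card_le _).trans (card_roots' _))
    intro β hβ
    rw [Multiset.mem_toFinset, mem_roots hmon.ne_zero, IsRoot]
    exact (Finset.mem_filter.1 hβ).2
  have h4 : ((Finset.univ.filter (fun a : F => (∏ i, GG F i).eval a = 0)).card : ℤ) ≤ 14 := by
    exact_mod_cast h3
  linarith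

lemma exists_all (p : ℕ) [Fact p.Prime] [CharP F p] (hp2 : p ≠ 2)
    (H : ∀ c : ℕ, c ∣ 690 ^ 3 → (c : F) ≠ 0) (hm : IsSquare (-1 : F))
    (hbig : 2400000 < Fintype.card F) :
    ∃ a : F, ∀ i, quadraticChar F ((GG F i).eval a) = ss i := by
  by_contra hcon
  push Not at hcon
  have hU := upper hcon
  have hL := lower p hp2 H hm
  have hU' : ((∑ a : F, ∏ i, (1 + ss i * quadraticChar F ((GG F i).eval a)) : ℤ) : ℝ) ≤ 3584 := by
    exact_mod_cast hU
  have hb : (2400000 : ℝ) < Fintype.card F := by exact_mod_cast hbig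
  have hs : (1549 : ℝ) < √(Fintype.card F : ℝ) := by
    rw [Real.lt_sqrt (by norm_num)]; linarith
  have hsq := Real.sq_sqrt (show (0 : ℝ) ≤ Fintype.card F by positivity)
  nlinarith
end Final2

end WeilSum

/-- For `q ≡ 1 (mod 4)` large, in characteristic `p ∉ {2,3,5,23}`, there exists
`a ∈ F_q` satisfying the square/non-square conditions of Theorem 2.4. -/
theorem exists_good_a_q1mod4 (F : Type*) [Field F] [Fintype F]
    (p q : ℕ) (hp : p.Prime) (hchar : CharP F p)
    (hp2 : p ≠ 2) (hp3 : p ≠ 3) (hp5 : p ≠ 5) (hp23 : p ≠ 23)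
    (hq : Fintype.card F = q) (h4 : q % 4 = 1) (hbig : 2400000 < q) :
    ∃ a : F, a ≠ -1 ∧ a ≠ 0 ∧ a ≠ 1 ∧
      IsSquare a ∧ IsSquare (a + 1) ∧ IsSquare (a ^ 3 - a - 1) ∧
      ¬ IsSquare (a - 1) ∧ ¬ IsSquare (a ^ 2 + 1) ∧
      ¬ IsSquare (a ^ 2 - a - 1) ∧ ¬ IsSquare (a ^ 2 + a + 1) ∧
      ¬ IsSquare (a ^ 2 + a - 1) := by
  classical
  haveI : Fact p.Prime := ⟨hp⟩
  have hm : IsSquare (-1 : F) := by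
    rw [FiniteField.isSquare_neg_one_iff, hq]; omega
  obtain ⟨a, ha⟩ := WeilSum.exists_all (F := F) p hp2
    (fun c hc => WeilSum.cast_ne_zero' p hp hp2 hp3 hp5 hp23 c hc) hm (by omega)
  have hsqr : ∀ x : F, quadraticChar F x = 1 → x ≠ 0 ∧ IsSquare x := by
    intro x hx
    have h0 : x ≠ 0 := by rintro rfl; simp at hx
    exact ⟨h0, (quadraticChar_one_iff_isSquare h0).1 hx⟩
  have hnsq : ∀ x : F, quadraticChar F x = -1 → ¬ IsSquare x := fun x hx =>
    quadraticChar_neg_one_iff_not_isSquare.1 hx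
  have h0 := ha 0
  have h1 := ha 1
  have h2 := ha 2
  have h3 := ha 3
  have h4' := ha 4
  have h5 := ha 5
  have h6 := ha 6
  have h7 := ha 7
  simp [WeilSum.GG, WeilSum.ss, -quadraticChar_apply] at h0 h1 h2 h3 h4' h5 h6 h7
  refine ⟨a, ?_, (hsqr _ h0).1, ?_, (hsqr _ h0).2, (hsqr _ h1).2, (hsqr _ h2).2, hnsq _ h3,
    hnsq _ h4', hnsq _ h5, hnsq _ h6, hnsq _ h7⟩
  · rintro rfl
    exact (hsqr _ h1).1 (by ring)
  · rintro rfl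
    exact hnsq _ h3 (by simp)
end

section
/- Let q be a power of a prime p with p ∉ {2, 3, 5, 7, 23}, q ≡ 3 (mod 4), and q > 2.4·10⁶. Then there exists a ∈ F_q such that a ≠ −1, 0, 1, the elements a, a+1, a−1, a²+1, a³+a²−1 are squares in F_q, and the elements a²−a+1, a²+a+1, a²+a−1 are non-squares in F_q. -/
section Helpers
open Polynomial

section Stepanov

lemma coeff_mul_bound {K : Type*} [Field K] {A B : K[X][X]} {k l : ℕ}
    (hA : ∀ j, (A.coeff j).natDegree ≤ k) (hB : ∀ j, (B.coeff j).natDegree ≤ l) (j : ℕ) :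
    ((A * B).coeff j).natDegree ≤ k + l := by
  rw [coeff_mul]
  apply natDegree_sum_le_of_forall_le
  intro x _
  exact natDegree_mul_le.trans (add_le_add (hA _) (hB _))

lemma eq_zero_of_eval_X_pow {K : Type*} [Field K] (r : ℕ) (P : K[X][X])
    (hP : ∀ j, (P.coeff j).natDegree < r) (h : P.eval (X ^ r) = 0) : P = 0 := by
  ext j i
  by_cases hi : r ≤ i
  · rw [coeff_eq_zero_of_natDegree_lt ((hP j).trans_le hi)]; simp
  push Not at hi
  have h1 := congrArg (fun g => g.coeff (i + r * j)) h
  simp only [eval_eq_sum, Polynomial.sum, finsetSum_coeff, ← pow_mul, coeff_mul_X_pow',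
    coeff_zero] at h1
  rw [Finset.sum_eq_single j] at h1
  · simpa using h1
  · intro b _ hb
    split_ifs with h2
    · apply coeff_eq_zero_of_natDegree_lt
      refine (hP b).trans_le ?_
      rcases lt_or_gt_of_ne hb with h3 | h3
      · obtain ⟨c, rfl⟩ := Nat.exists_eq_add_of_lt h3
        have : i + r * (b + c + 1) = r * b + (r * c + r + i) := by ring
        rw [this, Nat.add_sub_cancel_left]; omega
      · exfalso
        obtain ⟨c, rfl⟩ := Nat.exists_eq_add_of_lt h3
        have : r * (j + c + 1) = r * j + (r * c + r) := by ring
        omega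
    · rfl
  · intro h2
    rw [notMem_support_iff.mp h2]; simp

lemma no_square_relation {K : Type*} [Field K] {f : K[X]} (hs : f.Separable)
    (hd : 0 < f.natDegree) (fm : f.Monic) {g : K[X]} (hg : g.Monic) {A B : K[X][X]}
    (h : C f * A ^ 2 = g.map C * B ^ 2) : A = 0 ∧ B = 0 := by
  have hf0 : f ≠ 0 := fm.ne_zero
  have hC : (C f : K[X][X]) ≠ 0 := by simpa using hf0
  have hgm : (g.map (C : K →+* K[X])).Monic := hg.map _
  by_cases hB : B = 0
  · subst hB
    simp [hf0] at h
    exact ⟨h, rfl⟩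
  exfalso
  have hA : A ≠ 0 := by
    rintro rfl
    simp [hB, hgm.ne_zero] at h
  obtain ⟨π, hπ, hdvd⟩ := exists_irreducible_of_natDegree_pos hd
  have hp : Prime (C π : K[X][X]) := prime_C_iff.mpr hπ.prime
  have h2 := congrArg (emultiplicity (C π)) h
  rw [emultiplicity_mul hp, emultiplicity_mul hp, emultiplicity_pow hp, emultiplicity_pow hp] at h2
  have e1 : emultiplicity (C π) (C f) = 1 := by
    have : emultiplicity (C π) (C f) = ((1 : ℕ) : ℕ∞) := by
      rw [emultiplicity_eq_coe]
      refine ⟨by simpa using (_root_.map_dvd C hdvd), ?_⟩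
      intro h3
      rw [← map_pow, C_dvd_iff_dvd_coeff] at h3
      have h4 := h3 0
      simp only [coeff_C_zero] at h4
      rw [one_add_one_eq_two, pow_two] at h4
      exact hπ.not_isUnit (hs.squarefree _ h4)
    simpa using this
  have e2 : emultiplicity (C π) (g.map (C : K →+* K[X])) = 0 := by
    rw [emultiplicity_eq_zero, C_dvd_iff_dvd_coeff]
    intro h3
    have := h3 (g.map (C : K →+* K[X])).natDegree
    rw [coeff_natDegree, hgm.leadingCoeff] at this
    exact hπ.not_isUnit (isUnit_of_dvd_one this)
  have fA := (FiniteMultiplicity.of_prime_left hp hA).emultiplicity_eq_multiplicity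
  have fB := (FiniteMultiplicity.of_prime_left hp hB).emultiplicity_eq_multiplicity
  rw [e1, e2, fA, fB] at h2
  have h3 : 1 + 2 * multiplicity (C π) A = 0 + 2 * multiplicity (C π) B := by exact_mod_cast h2
  omega

/-- The polynomial in `Y` with coefficient vector `a`. -/
noncomputable def biv {K : Type*} [Field K] {m L : ℕ} (a : Fin m → degreeLT K L) : K[X][X] :=
  ∑ j : Fin m, C (a j : K[X]) * X ^ (j : ℕ)

lemma biv_coeff {K : Type*} [Field K] {m L : ℕ} (a : Fin m → degreeLT K L) (j : Fin m) :
    (biv a).coeff j = a j := by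
  simp only [biv, finsetSum_coeff, coeff_C_mul, coeff_X_pow]
  rw [Finset.sum_eq_single j]
  · simp
  · intro b _ hb
    rw [if_neg (fun h => hb (Fin.ext h.symm))]; simp
  · simp

lemma degLT_natDegree {K : Type*} [Field K] {L : ℕ} (a : degreeLT K L) :
    (a : K[X]).natDegree ≤ L - 1 := by
  rcases Nat.eq_zero_or_pos L with rfl | hL
  · have := mem_degreeLT.mp a.2
    have h0 : (a : K[X]) = 0 := by
      rw [← degree_eq_bot]; simpa using this
    simp [h0]
  · have := mem_degreeLT.mp a.2
    by_cases h0 : (a : K[X]) = 0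
    · simp [h0]
    · rw [← natDegree_lt_iff_degree_lt h0] at this; omega

lemma biv_coeff_deg {K : Type*} [Field K] {m L : ℕ} (a : Fin m → degreeLT K L) (j : ℕ) :
    ((biv a).coeff j).natDegree ≤ L - 1 := by
  simp only [biv, finsetSum_coeff, coeff_C_mul, coeff_X_pow]
  apply natDegree_sum_le_of_forall_le
  intro i _
  split_ifs
  · simpa using degLT_natDegree (a i)
  · simp

lemma nonzero_aux {K : Type*} [Field K] (p s : ℕ) [Fact p.Prime] [CharP K p] {f : K[X]}
    (hs : f.Separable) (hd : 0 < f.natDegree) (fm : f.Monic) {m L t : ℕ} (ht : p ^ s = 2 * t + 1)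
    (hL : f.natDegree + 2 * (L - 1) < p ^ s) (a b : Fin m → degreeLT K L)
    (h : (biv a).eval (X ^ p ^ s) + (biv b).eval (X ^ p ^ s) * f ^ t = 0) : a = 0 ∧ b = 0 := by
  set A := biv a with hA
  set B := biv b with hB
  set r := p ^ s with hr
  set g : K[X] := f.map (iterateFrobenius K p s) with hg
  have gm : g.Monic := fm.map _
  have hge : (g.map (C : K →+* K[X])).eval (X ^ r) = f ^ r := by
    have h1 : expand K (p ^ s) g = f ^ r := by
      rw [hg, ← Polynomial.map_expand]
      exact map_iterateFrobenius_expand p f s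
    rw [← h1, eval_map, expand_eq_sum, eval₂_eq_sum]
  have key : C f * A ^ 2 = g.map C * B ^ 2 := by
    rw [← sub_eq_zero]
    apply eq_zero_of_eval_X_pow r
    · intro j
      have hA2 : ∀ j, ((A ^ 2).coeff j).natDegree ≤ (L - 1) + (L - 1) := by
        intro j; rw [pow_two]; exact coeff_mul_bound (biv_coeff_deg a) (biv_coeff_deg a) j
      have hB2 : ∀ j, ((B ^ 2).coeff j).natDegree ≤ (L - 1) + (L - 1) := by
        intro j; rw [pow_two]; exact coeff_mul_bound (biv_coeff_deg b) (biv_coeff_deg b) j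
      have h1 : ((C f * A ^ 2).coeff j).natDegree < r := by
        rw [coeff_C_mul]
        refine natDegree_mul_le.trans_lt ?_
        have := hA2 j; omega
      have h2 : ((g.map C * B ^ 2).coeff j).natDegree < r := by
        refine (coeff_mul_bound (k := 0) ?_ hB2 j).trans_lt (by omega)
        intro j; simp
      rw [coeff_sub]
      exact (natDegree_sub_le _ _).trans_lt (max_lt h1 h2)
    · rw [eval_sub, eval_mul, eval_mul, eval_C, eval_pow, eval_pow, hge, ht]
      have : A.eval (X ^ r) = - (B.eval (X ^ r) * f ^ t) := eq_neg_of_add_eq_zero_left h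
      rw [ht] at this
      rw [this]; ring
  obtain ⟨h1, h2⟩ := no_square_relation hs hd fm gm key
  constructor
  · ext1 j; apply Subtype.ext; rw [← biv_coeff a j, ← hA, h1]; simp
  · ext1 j; apply Subtype.ext; rw [← biv_coeff b j, ← hB, h2]; simp

end Stepanov

section Stepanov2

lemma card_degreeLT {K : Type*} [Field K] [Fintype K] (L : ℕ) :
    Nat.card (degreeLT K L) = Fintype.card K ^ L := by
  rw [Nat.card_congr (degreeLTEquiv K L).toEquiv]
  simp

instance {K : Type*} [Field K] [Fintype K] (L : ℕ) : Finite (degreeLT K L) :=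
  Finite.of_equiv _ (degreeLTEquiv K L).toEquiv.symm

lemma exists_kernel {K : Type*} [Field K] [Fintype K] (p s : ℕ) [Fact p.Prime] [CharP K p]
    (f : K[X]) (ε : K) {m L t D : ℕ} (hm : 0 < m)
    (hD : D = p ^ s * (L - 1) + m + f.natDegree * t) (hlt : D < 2 * (L * m)) :
    ∃ a b : Fin m → degreeLT K L, ¬ (a = 0 ∧ b = 0) ∧
      ∑ j : Fin m, (C ε * f ^ t * (a j : K[X]) ^ p ^ s + (b j : K[X]) ^ p ^ s) * X ^ (j : ℕ)
        = 0 := by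
  classical
  let V := (Fin m → degreeLT K L) × (Fin m → degreeLT K L)
  let Ψ : V → K[X] := fun v => ∑ j : Fin m,
    (C ε * f ^ t * (v.1 j : K[X]) ^ p ^ s + (v.2 j : K[X]) ^ p ^ s) * X ^ (j : ℕ)
  have hdeg : ∀ v, Ψ v ∈ degreeLT K D := by
    intro v
    have h1 : (Ψ v).natDegree ≤ D - 1 := by
      apply natDegree_sum_le_of_forall_le
      intro j _
      refine natDegree_mul_le.trans ?_
      have e1 : (C ε * f ^ t * (v.1 j : K[X]) ^ p ^ s).natDegree
          ≤ f.natDegree * t + p ^ s * (L - 1) := by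
        refine natDegree_mul_le.trans (add_le_add ?_ ?_)
        · refine (natDegree_C_mul_le _ _).trans ?_
          rw [mul_comm]; exact natDegree_pow_le
        · exact natDegree_pow_le.trans (Nat.mul_le_mul_left _ (degLT_natDegree _))
      have e2 : ((v.2 j : K[X]) ^ p ^ s).natDegree ≤ f.natDegree * t + p ^ s * (L - 1) := by
        refine le_trans ?_ (Nat.le_add_left _ _)
        exact natDegree_pow_le.trans (Nat.mul_le_mul_left _ (degLT_natDegree _))
      have e3 := natDegree_add_le_of_le e1 e2
      rw [max_self] at e3
      have e4 : (X ^ (j : ℕ) : K[X]).natDegree ≤ j := natDegree_X_pow_le _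
      have := j.2
      omega
    rw [mem_degreeLT]
    refine (degree_le_of_natDegree_le h1).trans_lt ?_
    exact_mod_cast (by omega : D - 1 < D)
  let Φ : V → degreeLT K D := fun v => ⟨Ψ v, hdeg v⟩
  have hcard : Nat.card (degreeLT K D) < Nat.card V := by
    rw [Nat.card_prod, Nat.card_fun, card_degreeLT, card_degreeLT, ← pow_mul, ← pow_add]
    apply Nat.pow_lt_pow_right Fintype.one_lt_card
    simpa [two_mul] using hlt
  obtain ⟨u, v, huv, he⟩ : ∃ u v : V, u ≠ v ∧ Φ u = Φ v := by
    by_contra! hcon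
    have hinj : Function.Injective Φ := fun u v h => by
      by_contra h2; exact hcon u v h2 h
    exact absurd (Nat.card_le_card_of_injective Φ hinj) (not_le.mpr hcard)
  have he' : Ψ u = Ψ v := congrArg Subtype.val he
  refine ⟨u.1 - v.1, u.2 - v.2, ?_, ?_⟩
  · rintro ⟨h1, h2⟩
    exact huv (Prod.ext (sub_eq_zero.mp h1) (sub_eq_zero.mp h2))
  · rw [← sub_eq_zero] at he'
    rw [← he', ← Finset.sum_sub_distrib]
    apply Finset.sum_congr rfl
    intro j _
    simp only [Pi.sub_apply, Submodule.coe_sub, sub_pow_char_pow]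
    ring

lemma stepanov_count {K : Type*} [Field K] [Fintype K] [DecidableEq K] (p s : ℕ) [Fact p.Prime]
    [CharP K p] {f : K[X]} (hs : f.Separable) (hd : 0 < f.natDegree) (fm : f.Monic) (t : ℕ)
    (ht : p ^ s = 2 * t + 1) (hcard : Fintype.card K = (p ^ s) ^ 2) (ε : K) (hε : ε * ε = 1)
    (hbig : 4 * (f.natDegree + 1) ≤ p ^ s) :
    2 * (Finset.univ.filter (fun x : K => (f.eval x) ^ (Fintype.card K / 2) = ε)).card
      ≤ (p ^ s) ^ 2 + 4 * (f.natDegree + 1) * p ^ s := by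
  set d := f.natDegree with hdd
  set r := p ^ s with hr
  obtain ⟨L, hL1, hL2⟩ : ∃ L, 2 * L + d ≤ r + 1 ∧ r ≤ 2 * L + d :=
    ⟨(r + 1 - d) / 2, by omega, by omega⟩
  have hL0 : 1 ≤ L := by omega
  obtain ⟨L, rfl⟩ : ∃ L', L = L' + 1 := ⟨L - 1, by omega⟩
  have hlt : r * (L + 1 - 1) + (t + d + 1) + d * t < 2 * ((L + 1) * (t + d + 1)) := by
    rw [Nat.add_sub_cancel]
    obtain ⟨e, he, he1⟩ : ∃ e, 2 * (L + 1) + d = r + e ∧ e ≤ 1 := ⟨2 * (L + 1) + d - r, by omega, by omega⟩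
    zify at *
    nlinarith
  obtain ⟨a, b, hab, hsum⟩ := exists_kernel p s f ε (m := t + d + 1) (L := L + 1) (t := t)
    (by omega) rfl hlt
  set H := (biv a).eval (X ^ r) + (biv b).eval (X ^ r) * f ^ t with hH
  have H0 : H ≠ 0 := fun h => hab (nonzero_aux p s hs hd fm ht (by omega) a b h)
  have heval : ∀ (a : Fin (t + d + 1) → degreeLT K (L + 1)), (biv a).eval (X ^ r)
      = ∑ j : Fin (t + d + 1), (a j : K[X]) * X ^ (r * (j : ℕ)) := by
    intro a
    simp [biv, eval_finsetSum, pow_mul]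
  have hdeg1 : ∀ (a : Fin (t + d + 1) → degreeLT K (L + 1)), ((biv a).eval (X ^ r)).natDegree
      ≤ L + r * (t + d) := by
    intro a
    rw [heval]
    apply natDegree_sum_le_of_forall_le
    intro j _
    refine natDegree_mul_le.trans (add_le_add (degLT_natDegree _) ?_)
    refine (natDegree_X_pow_le _).trans (Nat.mul_le_mul_left _ ?_)
    have := j.2; omega
  have hdegH : H.natDegree ≤ L + r * (t + d) + t * d := by
    refine (natDegree_add_le _ _).trans (max_le ((hdeg1 a).trans (Nat.le_add_right _ _)) ?_)
    exact natDegree_mul_le.trans (add_le_add (hdeg1 b) natDegree_pow_le)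
  have hsub : (Finset.univ.filter (fun x : K => (f.eval x) ^ (Fintype.card K / 2) = ε))
      ⊆ H.roots.toFinset := by
    intro x hx
    simp only [Finset.mem_filter, Finset.mem_univ, true_and] at hx
    rw [Multiset.mem_toFinset, mem_roots H0, IsRoot.def]
    have hc2 : Fintype.card K / 2 = t * r + t := by
      rw [hcard]
      have : r ^ 2 = 2 * (t * r + t) + 1 := by rw [ht]; ring
      omega
    rw [hc2, pow_add] at hx
    have hfx : (f.eval x) ^ t ≠ 0 := by
      intro h0; rw [h0] at hx; simp at hx; rw [← hx] at hε; simp at hε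
    have hxr : ∀ j : ℕ, (x ^ (r * j)) ^ r = x ^ j := by
      intro j
      rw [← pow_mul, show r * j * r = r ^ 2 * j by ring, pow_mul, ← hcard, FiniteField.pow_card]
    have h1 : (H.eval x) ^ r * (f.eval x) ^ t = 0 := by
      have h2 := congrArg (fun g => ε * eval x g) hsum
      simp only [eval_zero, mul_zero] at h2
      rw [← h2, hH, heval, heval, eval_add, eval_mul, add_pow_char_pow, mul_pow, eval_finsetSum,
        eval_finsetSum, sum_pow_char_pow, sum_pow_char_pow, eval_finsetSum]
      simp only [eval_mul, eval_pow, eval_X, mul_pow, eval_add, eval_C]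
      rw [add_mul, mul_assoc _ _ (eval x f ^ t), ← pow_mul, hx]
      rw [Finset.sum_mul, Finset.sum_mul, Finset.mul_sum, ← Finset.sum_add_distrib]
      apply Finset.sum_congr rfl
      intro j _
      rw [← hr, hxr j]
      linear_combination -(eval x (a j : K[X])) ^ r * x ^ (j : ℕ) * eval x f ^ t * hε
    rcases mul_eq_zero.mp h1 with h3 | h3
    · exact pow_eq_zero_iff (by omega) |>.mp h3
    · exact absurd h3 hfx
  have h1 := (Finset.card_le_card hsub).trans ((Multiset.toFinset_card_le _).trans (card_roots' H))
  have h2 := h1.trans hdegH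
  calc _ ≤ 2 * (L + r * (t + d) + t * d) := Nat.mul_le_mul_left _ h2
    _ ≤ _ := by
      zify at *
      nlinarith

end Stepanov2

section CharSum

lemma stepanov_bound {K : Type*} [Field K] [Fintype K] [DecidableEq K] (p s : ℕ) [Fact p.Prime]
    [CharP K p] (hp2 : p ≠ 2) {f : K[X]} (hs : f.Separable) (hd : 0 < f.natDegree) (fm : f.Monic)
    (hcard : Fintype.card K = (p ^ s) ^ 2) (hbig : 4 * (f.natDegree + 1) ≤ p ^ s) :
    |∑ x : K, quadraticChar K (f.eval x)| ≤ (5 * (f.natDegree : ℤ) + 5) * (p ^ s : ℕ) := by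
  have hodd : Odd (p ^ s) := ((Fact.out : p.Prime).odd_of_ne_two hp2).pow
  obtain ⟨t, ht⟩ := hodd
  have hch : ringChar K ≠ 2 := by rw [ringChar.eq K p]; exact hp2
  have h11 : (1 : K) ≠ -1 := fun h => (Ring.neg_one_ne_one_of_char_ne_two hch) h.symm
  have hQ : Fintype.card K / 2 ≠ 0 := by
    have : 1 < Fintype.card K := Fintype.one_lt_card
    omega
  set u : K → K := fun x => (f.eval x) ^ (Fintype.card K / 2) with hu
  have b1 := stepanov_count p s hs hd fm t ht hcard 1 (by ring) hbig
  have b2 := stepanov_count p s hs hd fm t ht hcard (-1) (by ring) hbig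
  have b3 : (Finset.univ.filter (fun x : K => f.eval x = 0)).card ≤ f.natDegree := by
    refine le_trans (Finset.card_le_card ?_) ((Multiset.toFinset_card_le _).trans (card_roots' f))
    intro x hx
    simpa [fm.ne_zero] using hx
  have key : ∀ x : K, quadraticChar K (f.eval x) = (if u x = 1 then (1 : ℤ) else 0)
      - (if u x = -1 then 1 else 0) ∧ (1 : ℤ) = (if u x = 1 then (1 : ℤ) else 0)
      + (if u x = -1 then 1 else 0) + (if f.eval x = 0 then 1 else 0) := by
    intro x
    by_cases h0 : f.eval x = 0
    · have : u x = 0 := by simp [hu, h0, hQ]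
      simp [this, h0]
    · rw [quadraticChar_eq_pow_of_char_ne_two hch h0]
      have h2 : u x = 1 ∨ u x = -1 := FiniteField.pow_dichotomy hch h0
      have h3 : f.eval x ^ (Fintype.card K / 2) = u x := rfl
      rw [h3]
      rcases h2 with h2 | h2
      · simp [h2, h0, h11]
      · simp [h2, h0, h11.symm]
  have e1 : ∑ x : K, quadraticChar K (f.eval x) =
      ((Finset.univ.filter (fun x : K => u x = 1)).card : ℤ)
        - (Finset.univ.filter (fun x : K => u x = -1)).card := by
    rw [Finset.sum_congr rfl (fun x _ => (key x).1)]
    simp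
  have e2 : (Fintype.card K : ℤ) = ((Finset.univ.filter (fun x : K => u x = 1)).card : ℤ)
        + (Finset.univ.filter (fun x : K => u x = -1)).card
        + (Finset.univ.filter (fun x : K => f.eval x = 0)).card := by
    have : (Fintype.card K : ℤ) = ∑ x : K, (1 : ℤ) := by simp
    rw [this, Finset.sum_congr rfl (fun x _ => (key x).2)]
    simp [Finset.sum_add_distrib]
  rw [e1]
  rw [hcard] at e2
  rw [hu] at *
  set r := p ^ s
  zify at b1 b2 b3 hbig
  push_cast at e2
  have : (1 : ℤ) ≤ r := by have : 0 < r := by omega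
                           exact_mod_cast this
  rw [abs_le]
  constructor <;> nlinarith

/-- The characteristic polynomial of an element of an extension. -/
noncomputable def gx (F : Type*) {K : Type*} [Field F] [Field K] [Algebra F K] (x : K) : F[X] :=
  minpoly F x ^ (Module.finrank F K / (minpoly F x).natDegree)

/-- The multiplicative function on monic polynomials attached to `f`. -/
noncomputable def lam {F : Type*} [Field F] [Fintype F] [DecidableEq F] (f g : F[X]) : ℤ :=
  quadraticChar F (resultant g f)

lemma lam_mul {F : Type*} [Field F] [Fintype F] [DecidableEq F] (f : F[X]) {g h : F[X]}
    (hg : g.Monic) (hh : h.Monic) : lam f (g * h) = lam f g * lam f h := by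
  unfold lam
  rw [hg.natDegree_mul hh, resultant_mul_left _ _ _ _ le_rfl, map_mul]

lemma resultant_gx {F K : Type*} [Field F] [Finite F] [Field K] [Finite K] [Algebra F K]
    (f : F[X]) (x : K) : resultant (gx F x) f = Algebra.norm F (aeval x f) := by
  classical
  have hx : IsIntegral F x := Algebra.IsIntegral.isIntegral x
  have hm : (minpoly F x).Monic := minpoly.monic hx
  set L := IntermediateField.adjoin F {x} with hL
  set pb := IntermediateField.adjoin.powerBasis hx with hpb
  have hgen : algebraMap L K pb.gen = x := by
    rw [hpb, IntermediateField.adjoin.powerBasis_gen]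
    exact IntermediateField.AdjoinSimple.algebraMap_gen F x
  have hmin : minpoly F pb.gen = minpoly F x := by
    have := minpoly.algebraMap_eq (A := F) (algebraMap L K).injective pb.gen
    rw [hgen] at this
    exact this.symm
  have hfin : Module.finrank F K / (minpoly F x).natDegree = Module.finrank L K := by
    rw [← Module.finrank_mul_finrank F L K, hL, IntermediateField.adjoin.finrank hx]
    exact Nat.mul_div_cancel_left _ (minpoly.natDegree_pos hx)
  rw [gx, hfin, resultant_pow_left _ _ _ _ (by simp [hm]) le_rfl]
  have h1 : aeval x f = algebraMap L K (aeval pb.gen f) := by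
    rw [← aeval_algebraMap_apply, hgen]
  rw [h1, ← Algebra.norm_norm (S := L), Algebra.norm_algebraMap, map_pow]
  congr 1
  let E := AlgebraicClosure F
  apply (algebraMap F E).injective
  have hsep : (minpoly F x).Separable := Algebra.IsSeparable.isSeparable F x
  rw [← resultant_map_map]
  have hnd : (minpoly F x).natDegree = ((minpoly F x).map (algebraMap F E)).natDegree := by simp
  rw [hnd, resultant_eq_prod_eval _ _ _ (by simp) (IsAlgClosed.splits _), (hm.map _).leadingCoeff,
    one_pow, one_mul, Algebra.norm_eq_prod_embeddings F E]
  rw [Fintype.prod_equiv pb.liftEquiv' (fun σ : L →ₐ[F] E => σ (aeval pb.gen f))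
    (fun y => eval (y : E) (f.map (algebraMap F E)))]
  · rw [Finset.prod_mem_multiset _ _ (fun y => eval (y : E) (f.map (algebraMap F E)))
      (fun _ => rfl), Finset.prod_eq_multiset_prod, Multiset.toFinset_val,
      Multiset.dedup_eq_self.mpr, hmin]
    exact nodup_roots (by rw [hmin]; exact hsep.map)
  · intro σ
    rw [PowerBasis.liftEquiv'_apply_coe, eval_map_algebraMap, aeval_algHom_apply]

lemma lam_gx {F K : Type*} [Field F] [Fintype F] [DecidableEq F] [Field K] [Fintype K]
    [DecidableEq K] [Algebra F K] (hF : ringChar F ≠ 2)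
    (f : F[X]) (x : K) : lam f (gx F x) = quadraticChar K (aeval x f) := by
  have hK : ringChar K ≠ 2 := by rwa [← Algebra.ringChar_eq F K]
  rw [lam, resultant_gx]
  set z := aeval x f
  have h1 := quadraticChar_eq_pow_of_char_ne_two' hK z
  have h2 := congrArg (algebraMap F K) (quadraticChar_eq_pow_of_char_ne_two' hF (Algebra.norm F z))
  rw [map_intCast, map_pow, FiniteField.algebraMap_norm_eq_pow, ← pow_mul] at h2
  have hexp : (Nat.card K - 1) / (Nat.card F - 1) * (Fintype.card F / 2) = Fintype.card K / 2 := by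
    have hc : Fintype.card K = Fintype.card F ^ Module.finrank F K :=
      Module.card_eq_pow_finrank
    rw [Nat.card_eq_fintype_card, Nat.card_eq_fintype_card]
    have hodd := FiniteField.odd_card_of_char_ne_two hF
    have hodd' := FiniteField.odd_card_of_char_ne_two hK
    have hF1 : 1 < Fintype.card F := Fintype.one_lt_card
    have hK1 : 1 < Fintype.card K := Fintype.one_lt_card
    have hdvd : Fintype.card F - 1 ∣ Fintype.card K - 1 := by
      rw [hc]; simpa using Nat.sub_dvd_pow_sub_pow (Fintype.card F) 1 (Module.finrank F K)
    obtain ⟨m, hm⟩ := hdvd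
    obtain ⟨w, hw⟩ : ∃ w, Fintype.card F = 2 * w + 1 := ⟨Fintype.card F / 2, by omega⟩
    rw [hm, hw]
    have : Fintype.card K = 2 * (w * m) + 1 := by
      have : (Fintype.card F - 1) * m = 2 * (w * m) := by rw [hw]; simp; ring
      omega
    rw [this, Nat.add_sub_cancel, Nat.mul_div_cancel_left _ (by omega),
      show (2 * w + 1) / 2 = w by omega, show (2 * (w * m) + 1) / 2 = w * m by omega, mul_comm]
  rw [hexp, ← h1] at h2
  refine Int.cast_injOn_of_ringChar_ne_two hK ?_ ?_ h2
  · rcases quadraticChar_isQuadratic F (Algebra.norm F z) with h | h | h <;> simp [h]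
  · rcases quadraticChar_isQuadratic K z with h | h | h <;> simp [h]

end CharSum

section LFun

noncomputable instance extFintype (F : Type*) [Field F] [Finite F] (p : ℕ) [Fact p.Prime]
    [CharP F p] (n : ℕ) : Fintype (FiniteField.Extension F p n) := Fintype.ofFinite _

noncomputable instance extDecEq (F : Type*) [Field F] [Finite F] (p : ℕ) [Fact p.Prime]
    [CharP F p] (n : ℕ) : DecidableEq (FiniteField.Extension F p n) := Classical.decEq _

open Classical in
/-- Number of elements of the degree `k+1` extension whose characteristic polynomial divides `g`. -/
noncomputable def cnt (F : Type*) [Field F] [Finite F] (p : ℕ) [Fact p.Prime]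
    [CharP F p] (g : F[X]) (k : ℕ) : ℕ :=
  (Finset.univ.filter (fun x : FiniteField.Extension F p (k + 1) => gx F x ∣ g)).card

lemma roots_count {F : Type*} [Field F] [Finite F] (p : ℕ) [Fact p.Prime] [CharP F p]
    {P : F[X]} (hP : Irreducible P) (k : ℕ) (hk : P.natDegree ∣ k + 1) :
    (Finset.univ.filter (fun x : FiniteField.Extension F p (k + 1) => aeval x P = 0)).card
      = P.natDegree := by
  set K := FiniteField.Extension F p (k + 1)
  have hsep : P.Separable := PerfectField.separable_of_irreducible hP
  have hdvd := hP.natDegree_dvd_iff_dvd_X_pow_card_pow_sub_X.mp hk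
  have hspl : (P.map (algebraMap F K)).Splits := by
    refine Splits.of_dvd ?_ ?_ (Polynomial.map_dvd (algebraMap F K) hdvd)
    · apply IsSplittingField.splits
    · exact map_ne_zero (FiniteField.X_pow_card_pow_sub_X_ne_zero _ (by omega) Finite.one_lt_card)
  rw [← card_rootSet_eq_natDegree hsep hspl, Fintype.card_eq_nat_card, Nat.card_coe_set_eq,
    ← Set.ncard_coe_finset]
  congr 1
  ext x
  rw [Finset.mem_coe, Finset.mem_filter]
  have := mem_rootSet (p := P) (S := K) (a := x)
  simp only [Finset.mem_univ, true_and]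
  exact ⟨fun h => this.mpr ⟨hP.ne_zero, h⟩, fun h => (this.mp h).2⟩

lemma gx_step {F K : Type*} [Field F] [Finite F] [Field K] [Finite K] [Algebra F K]
    {P g : F[X]} (hP : Irreducible P) (hg : g ≠ 0) (x : K) :
    (gx F x ∣ P * g ∧ ¬ gx F x ∣ g) ↔
      (Module.finrank F K = (multiplicity P g + 1) * P.natDegree ∧ aeval x P = 0) := by
  have hx : IsIntegral F x := Algebra.IsIntegral.isIntegral x
  have hmi : Irreducible (minpoly F x) := minpoly.irreducible hx
  have hpos := minpoly.natDegree_pos hx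
  obtain ⟨e, he⟩ : (minpoly F x).natDegree ∣ Module.finrank F K := minpoly.degree_dvd hx
  have hn : 0 < Module.finrank F K := Module.finrank_pos
  rw [gx, he, Nat.mul_div_cancel_left _ hpos]
  set m := minpoly F x with hm
  by_cases h : aeval x P = 0
  · have hdvd : m ∣ P := minpoly.dvd F x h
    have hass : Associated m P := hmi.associated_of_dvd hP hdvd
    have hdeg : m.natDegree = P.natDegree := natDegree_eq_of_degree_eq (degree_eq_degree_of_associated hass)
    have hfm : FiniteMultiplicity m g := FiniteMultiplicity.of_prime_left hmi.prime hg
    have hmul : multiplicity P g = multiplicity m g := multiplicity_eq_of_associated_left hass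
    have he0 : e ≠ 0 := by rintro rfl; omega
    obtain ⟨e, rfl⟩ := Nat.exists_eq_succ_of_ne_zero he0
    have h1 : m ^ (e + 1) ∣ P * g ↔ m ^ e ∣ g := by
      rw [(hass.symm.mul_right g).dvd_iff_dvd_right, pow_succ', mul_dvd_mul_iff_left hmi.ne_zero]
    rw [Nat.succ_eq_add_one, h1, hfm.pow_dvd_iff_le_multiplicity, hfm.pow_dvd_iff_le_multiplicity, hmul, ← hdeg,
      mul_comm (m.natDegree), Nat.mul_left_inj hpos.ne']
    simp only [h, and_true]
    omega
  · simp only [h, and_false, iff_false, not_and, not_not]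
    intro h2
    have : ¬ m ∣ P := fun h3 => h ((minpoly.dvd_iff).mp h3)
    have hc : IsCoprime m P := (hmi.coprime_iff_not_dvd).mpr this
    exact (hc.pow_left).dvd_of_dvd_mul_left h2

lemma cnt_step {F : Type*} [Field F] [Finite F] (p : ℕ) [Fact p.Prime] [CharP F p]
    {P g : F[X]} (hP : Irreducible P) (hg : g ≠ 0) (k : ℕ) :
    cnt F p (P * g) k = cnt F p g k +
      if k + 1 = (multiplicity P g + 1) * P.natDegree then P.natDegree else 0 := by
  classical
  unfold cnt
  rw [← Finset.card_filter_add_card_filter_not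
    (s := Finset.univ.filter (fun x : FiniteField.Extension F p (k + 1) => gx F x ∣ P * g))
    (fun x => gx F x ∣ g), Finset.filter_filter, Finset.filter_filter]
  congr 1
  · congr 1
    ext x
    simp only [Finset.mem_filter, Finset.mem_univ, true_and]
    exact ⟨fun h => h.2, fun h => ⟨h.mul_left _, h⟩⟩
  · simp only [gx_step hP hg, FiniteField.finrank_extension]
    split_ifs with h
    · have e := roots_count p hP k (h ▸ Dvd.intro_left _ rfl)
      simp only [h, true_and]
      exact e
    · simp [h]

lemma cnt_total {F : Type*} [Field F] [Finite F] (p : ℕ) [Fact p.Prime] [CharP F p]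
    (g : F[X]) : g ≠ 0 → ∀ N, g.natDegree ≤ N → ∑ k ∈ Finset.range N, cnt F p g k = g.natDegree := by
  classical
  induction g using WfDvdMonoid.induction_on_irreducible with
  | zero => intro h; exact absurd rfl h
  | unit u hu =>
    intro _ N _
    rw [natDegree_eq_zero_of_isUnit hu]
    apply Finset.sum_eq_zero
    intro k _
    rw [cnt, Finset.card_eq_zero, Finset.filter_eq_empty_iff]
    intro x _ h
    have hx : IsIntegral F x := Algebra.IsIntegral.isIntegral x
    have h2 := isUnit_of_dvd_unit h hu
    rw [gx, isUnit_pow_iff] at h2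
    · exact (minpoly.irreducible hx).not_isUnit h2
    · have : 0 < Module.finrank F (FiniteField.Extension F p (k + 1)) := Module.finrank_pos
      exact (Nat.div_pos (Nat.le_of_dvd this (minpoly.degree_dvd hx)) (minpoly.natDegree_pos hx)).ne'
  | mul g P hg hP ih =>
    intro h0 N hN
    rw [natDegree_mul hP.ne_zero hg] at hN ⊢
    simp only [cnt_step p hP hg]
    rw [Finset.sum_add_distrib, ih hg N (by omega), add_comm]
    congr 1
    have hpos := hP.natDegree_pos
    have hle : multiplicity P g * P.natDegree ≤ g.natDegree := by
      rw [← natDegree_pow]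
      exact natDegree_le_of_dvd (pow_multiplicity_dvd _ _) hg
    have hv : (multiplicity P g + 1) * P.natDegree = multiplicity P g * P.natDegree + P.natDegree := by ring
    rw [Finset.sum_eq_single ((multiplicity P g + 1) * P.natDegree - 1)]
    · rw [if_pos (by omega)]
    · intro b _ hb
      rw [if_neg (by omega)]
    · intro h; exfalso; apply h; rw [Finset.mem_range]; omega

lemma finite_MS (F : Type*) [Field F] [Finite F] (n : ℕ) :
    {g : F[X] | g.Monic ∧ g.natDegree = n}.Finite := by
  have := Fintype.ofFinite F
  have h : (↑(degreeLT F (n + 1)) : Set F[X]).Finite :=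
    (inferInstance : Finite (degreeLT F (n + 1)))
  refine h.subset ?_
  rintro g ⟨_, h2⟩
  rw [SetLike.mem_coe, mem_degreeLT]
  exact degree_le_natDegree.trans_lt (by rw [h2]; exact_mod_cast Nat.lt_succ_self n)

/-- Monic polynomials of degree `n`. -/
noncomputable def MS (F : Type*) [Field F] [Finite F] (n : ℕ) : Finset F[X] :=
  (finite_MS F n).toFinset

lemma mem_MS {F : Type*} [Field F] [Finite F] {n : ℕ} {g : F[X]} :
    g ∈ MS F n ↔ g.Monic ∧ g.natDegree = n := by simp [MS]

/-- Coefficients of the L-function. -/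
noncomputable def acoef {F : Type*} [Field F] [Fintype F] [DecidableEq F] (f : F[X]) (n : ℕ) : ℤ :=
  ∑ g ∈ MS F n, lam f g

/-- Character sums over extensions of degree `k+1`. -/
noncomputable def Sext {F : Type*} [Field F] [Fintype F] (p : ℕ) [Fact p.Prime]
    [CharP F p] (f : F[X]) (k : ℕ) : ℤ :=
  ∑ x : FiniteField.Extension F p (k + 1), quadraticChar _ (aeval x f)

lemma gx_monic {F K : Type*} [Field F] [Finite F] [Field K] [Finite K] [Algebra F K] (x : K) :
    (gx F x).Monic := (minpoly.monic (Algebra.IsIntegral.isIntegral x)).pow _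

lemma gx_natDegree {F K : Type*} [Field F] [Finite F] [Field K] [Finite K] [Algebra F K] (x : K) :
    (gx F x).natDegree = Module.finrank F K := by
  rw [gx, natDegree_pow]
  exact Nat.div_mul_cancel (minpoly.degree_dvd (Algebra.IsIntegral.isIntegral x))

lemma acoef_zero {F : Type*} [Field F] [Fintype F] [DecidableEq F] (f : F[X]) :
    acoef f 0 = 1 := by
  have : MS F 0 = {1} := by
    ext g
    rw [mem_MS, Finset.mem_singleton]
    constructor
    · rintro ⟨h1, h2⟩; exact h1.natDegree_eq_zero.mp h2
    · rintro rfl; exact ⟨monic_one, natDegree_one⟩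
  simp [acoef, this, lam]

lemma newton {F : Type*} [Field F] [Fintype F] [DecidableEq F] (p : ℕ) [Fact p.Prime]
    [CharP F p] (hF : ringChar F ≠ 2) (f : F[X]) (n : ℕ) :
    (n : ℤ) * acoef f n = ∑ k ∈ Finset.range n, Sext p f k * acoef f (n - 1 - k) := by
  classical
  have h1 : ∀ k ∈ Finset.range n, Sext p f k * acoef f (n - 1 - k) =
      ∑ g ∈ MS F n, lam f g * (cnt F p g k : ℤ) := by
    intro k hk
    rw [Finset.mem_range] at hk
    unfold Sext
    rw [Finset.sum_mul]
    have h2 : ∀ x : FiniteField.Extension F p (k + 1),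
        quadraticChar _ (aeval x f) * acoef f (n - 1 - k) =
        ∑ g ∈ MS F n, if gx F x ∣ g then lam f g else 0 := by
      intro x
      have hdx : (gx F x).natDegree = k + 1 := by
        rw [gx_natDegree, FiniteField.finrank_extension]
      rw [← lam_gx hF, acoef, Finset.mul_sum, ← Finset.sum_filter]
      refine Finset.sum_bij (fun h _ => gx F x * h) ?_ ?_ ?_ ?_
      · intro h hh
        rw [mem_MS] at hh
        rw [Finset.mem_filter, mem_MS]
        refine ⟨⟨(gx_monic x).mul hh.1, ?_⟩, dvd_mul_right _ _⟩
        rw [(gx_monic x).natDegree_mul hh.1, hh.2, hdx]; omega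
      · intro h _ h' _ e
        exact mul_left_cancel₀ (gx_monic x).ne_zero e
      · intro g hg
        rw [Finset.mem_filter, mem_MS] at hg
        obtain ⟨⟨hgm, hgd⟩, h, rfl⟩ := hg
        have hhm : h.Monic := (gx_monic x).of_mul_monic_left hgm
        refine ⟨h, ?_, rfl⟩
        rw [mem_MS]
        refine ⟨hhm, ?_⟩
        rw [(gx_monic x).natDegree_mul hhm, hdx] at hgd
        omega
      · intro h hh
        rw [mem_MS] at hh
        exact (lam_mul f (gx_monic x) hh.1).symm
    rw [Finset.sum_congr rfl (fun x _ => h2 x), Finset.sum_comm]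
    apply Finset.sum_congr rfl
    intro g _
    rw [cnt, ← Finset.sum_filter, Finset.sum_const, nsmul_eq_mul, mul_comm]
  rw [Finset.sum_congr rfl h1, Finset.sum_comm, acoef, Finset.mul_sum]
  apply Finset.sum_congr rfl
  intro g hg
  rw [mem_MS] at hg
  rw [← Finset.mul_sum, ← Nat.cast_sum, cnt_total p g hg.1.ne_zero n hg.2.le, hg.2, mul_comm]

end LFun

section Vanish

lemma acoef_vanish {F : Type*} [Field F] [Fintype F] [DecidableEq F] {f : F[X]} (fm : f.Monic)
    {z : F[X]} (hz : quadraticChar F (resultant f z) = -1) {n : ℕ} (hn : f.natDegree ≤ n) :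
    acoef f n = 0 := by
  set ρ : F[X] → ℤ := fun g => quadraticChar F (resultant f g) with hρ
  have h1 : ∀ g N, g.natDegree ≤ N → ρ g = quadraticChar F (resultant f g f.natDegree N) := by
    intro g N hN
    obtain ⟨c, rfl⟩ := Nat.exists_eq_add_of_le hN
    rw [resultant_add_right_deg _ _ _ _ _ le_rfl, coeff_natDegree, fm.leadingCoeff, one_pow, one_mul]
  have h2 : ∀ g h, ρ (g + f * h) = ρ g := by
    intro g h
    set N := max g.natDegree (h.natDegree + f.natDegree) with hN
    have e1 : g.natDegree ≤ N := le_max_left _ _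
    have e2 : h.natDegree + f.natDegree ≤ N := le_max_right _ _
    have e3 : (g + f * h).natDegree ≤ N := by
      refine (natDegree_add_le _ _).trans (max_le e1 (natDegree_mul_le.trans ?_))
      omega
    rw [h1 _ N e3, h1 _ N e1, resultant_add_mul_right _ _ _ _ _ e2 le_rfl]
  have h3 : ∀ g h, ρ (g * h) = ρ g * ρ h := by
    intro g h
    rw [h1 _ _ natDegree_mul_le, resultant_mul_right _ _ _ _ le_rfl, map_mul]
  have h4 : ∀ g, ρ (g %ₘ f) = ρ g := by
    intro g
    conv_rhs => rw [← modByMonic_add_div g f]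
    rw [h2]
  have hcop : IsCoprime f z := by
    by_contra hc
    have : resultant f z = 0 := resultant_eq_zero_iff.mpr ⟨Or.inl fm.ne_zero, hc⟩
    rw [this] at hz
    simp at hz
  have hsum : ∑ g ∈ MS F n, ρ g = 0 := by
    let T : F[X] → F[X] := fun g => f * (g /ₘ f) + (g * z) %ₘ f
    have hTdiv : ∀ g, (T g) /ₘ f = g /ₘ f ∧ (T g) %ₘ f = (g * z) %ₘ f := by
      intro g
      refine div_modByMonic_unique (g /ₘ f) ((g * z) %ₘ f) fm ⟨by simp only [T]; ring, degree_modByMonic_lt _ fm⟩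
    have hTmem : ∀ g ∈ MS F n, T g ∈ MS F n := by
      intro g hg
      rw [mem_MS] at hg ⊢
      have e1 : T g = g + ((g * z) %ₘ f - g %ₘ f) := by
        have := modByMonic_add_div g f
        simp only [T]
        linear_combination this
      have e2 : ((g * z) %ₘ f - g %ₘ f).degree < g.degree := by
        refine (degree_sub_le _ _).trans_lt ?_
        have : f.degree ≤ g.degree := by
          rw [degree_eq_natDegree fm.ne_zero, degree_eq_natDegree hg.1.ne_zero, hg.2]
          exact_mod_cast hn
        exact max_lt ((degree_modByMonic_lt _ fm).trans_le this) ((degree_modByMonic_lt _ fm).trans_le this)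
      rw [e1]
      exact ⟨hg.1.add_of_left e2, by rw [natDegree_add_eq_left_of_degree_lt e2, hg.2]⟩
    have hTinj : ∀ g g', T g = T g' → g = g' := by
      intro g g' h
      have d1 := hTdiv g
      have d2 := hTdiv g'
      rw [h] at d1
      have q1 : g /ₘ f = g' /ₘ f := d1.1.symm.trans d2.1
      have q2 : (g * z) %ₘ f = (g' * z) %ₘ f := d1.2.symm.trans d2.2
      have q3 : f ∣ (g - g') * z := by
        rw [← modByMonic_eq_zero_iff_dvd fm, sub_mul, sub_modByMonic, q2, sub_self]
      have q4 : f ∣ g - g' := hcop.dvd_of_dvd_mul_right q3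
      rw [← modByMonic_eq_zero_iff_dvd fm, sub_modByMonic, sub_eq_zero] at q4
      rw [← modByMonic_add_div g f, ← modByMonic_add_div g' f, q1, q4]
    have hT : ∀ g, ρ (T g) = - ρ g := by
      intro g
      simp only [T]
      rw [add_comm, h2, h4, h3]
      have : ρ z = -1 := hz
      rw [this]; ring
    have himg : (MS F n).image T = MS F n := by
      apply Finset.eq_of_subset_of_card_le
      · intro x hx
        obtain ⟨g, hg, rfl⟩ := Finset.mem_image.mp hx
        exact hTmem g hg
      · rw [Finset.card_image_of_injective _ (fun g g' h => hTinj g g' h)]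
    have : ∑ g ∈ MS F n, ρ g = - ∑ g ∈ MS F n, ρ g := by
      conv_lhs => rw [← himg]
      rw [Finset.sum_image (fun g _ g' _ h => hTinj g g' h), ← Finset.sum_neg_distrib]
      exact Finset.sum_congr rfl (fun g _ => hT g)
    omega
  have : ∀ g ∈ MS F n, lam f g = quadraticChar F ((-1) ^ (n * f.natDegree)) * ρ g := by
    intro g hg
    rw [mem_MS] at hg
    rw [lam, resultant_comm, map_mul, hg.2, hρ]
    simp only [hg.2]
  rw [acoef, Finset.sum_congr rfl this, ← Finset.mul_sum, hsum, mul_zero]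

lemma Sext_bound {F : Type*} [Field F] [Fintype F] (p : ℕ) [Fact p.Prime]
    [CharP F p] (hp2 : p ≠ 2) {f : F[X]} (fm : f.Monic) (hs : f.Separable) (hd : 0 < f.natDegree)
    (i : ℕ) (hi : 4 * (f.natDegree + 1) ≤ Fintype.card F ^ (i + 1)) :
    |Sext p f (2 * i + 1)| ≤ (5 * (f.natDegree : ℤ) + 5) * (Fintype.card F : ℤ) ^ (i + 1) := by
  obtain ⟨a, -, ha⟩ := FiniteField.card F p
  set K := FiniteField.Extension F p (2 * i + 1 + 1) with hK
  have : CharP K p := charP_of_injective_algebraMap (algebraMap F K).injective p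
  have hcard : Fintype.card K = (p ^ ((a : ℕ) * (i + 1))) ^ 2 := by
    rw [Fintype.card_eq_nat_card, FiniteField.natCard_extension, Nat.card_eq_fintype_card, ha]
    ring
  have hq : p ^ ((a : ℕ) * (i + 1)) = Fintype.card F ^ (i + 1) := by rw [ha, pow_mul]
  have h := stepanov_bound (K := K) p ((a : ℕ) * (i + 1)) hp2 (f := f.map (algebraMap F K)) hs.map
    (by simpa using hd) (fm.map _) hcard (by rw [hq]; simpa using hi)
  rw [natDegree_map, hq] at h
  simp only [eval_map_algebraMap] at h
  push_cast at h
  exact h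

lemma exists_neg {F : Type*} [Field F] [Fintype F] [DecidableEq F] (p : ℕ) [Fact p.Prime]
    [CharP F p] (hp2 : p ≠ 2) {f : F[X]} (fm : f.Monic) (hs : f.Separable) (hd : 0 < f.natDegree) :
    ∃ z, quadraticChar F (resultant f z) = -1 := by
  classical
  by_contra! hcon
  have hF : ringChar F ≠ 2 := by rw [ringChar.eq F p]; exact hp2
  set q := Fintype.card F with hq
  have hq1 : 1 < q := Fintype.one_lt_card
  set d := f.natDegree with hdd
  obtain ⟨i, hi⟩ := pow_unbounded_of_one_lt (6 * d + 6) hq1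
  have hi' : 6 * d + 6 < q ^ (i + 1) := hi.trans_le (Nat.pow_le_pow_right hq1.le (Nat.le_succ i))
  have hb := Sext_bound p hp2 fm hs hd i (by rw [← hq, ← hdd]; omega)
  set K := FiniteField.Extension F p (2 * i + 1 + 1) with hK
  have hnn : ∀ x : K, (1 : ℤ) - (if aeval x f = 0 then 1 else 0) ≤ quadraticChar K (aeval x f) := by
    intro x
    split_ifs with h
    · simp [h]
    · rw [← lam_gx hF f x, lam, resultant_comm, map_mul, gx_natDegree, FiniteField.finrank_extension]
      have e1 : ((-1 : F)) ^ ((2 * i + 1 + 1) * f.natDegree) = 1 := by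
        rw [pow_mul, show 2 * i + 1 + 1 = 2 * (i + 1) by ring, pow_mul]; simp
      rw [e1, map_one, one_mul]
      have e2 := hcon (gx F x)
      rw [gx_natDegree, FiniteField.finrank_extension] at e2
      have e3 : lam f (gx F x) ≠ 0 := by
        rw [lam_gx hF f x]; exact fun h2 => h (quadraticChar_eq_zero_iff.mp h2)
      rw [lam, resultant_comm, map_mul, gx_natDegree, FiniteField.finrank_extension, e1, map_one,
        one_mul] at e3
      rcases quadraticChar_isQuadratic F (resultant f (gx F x) f.natDegree (2 * i + 1 + 1)) with h | h | h
      · exact absurd h e3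
      · rw [h]; norm_num
      · exact absurd h e2
  have hsum := Finset.sum_le_sum (s := Finset.univ) (fun x _ => hnn x)
  rw [Finset.sum_sub_distrib] at hsum
  have hroots : ((Finset.univ.filter (fun x : K => aeval x f = 0)).card) ≤ d := by
    refine le_trans (Finset.card_le_card (t := (f.map (algebraMap F K)).roots.toFinset) ?_)
      ((Multiset.toFinset_card_le _).trans ((card_roots' _).trans (natDegree_map_le)))
    intro x hx
    simpa [fm.ne_zero] using hx
  have hcard : Fintype.card K = (q ^ (i + 1)) ^ 2 := by
    rw [Fintype.card_eq_nat_card, FiniteField.natCard_extension, Nat.card_eq_fintype_card]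
    ring
  simp only [Finset.sum_const, Finset.card_univ, hcard, Finset.sum_boole] at hsum
  have hS : ∑ x : K, quadraticChar K (aeval x f) = Sext p f (2 * i + 1) := rfl
  rw [hS] at hsum
  have hb2 := (abs_le.mp hb).2
  zify at hi' hroots
  simp at hsum
  set Q : ℤ := (q : ℤ) ^ (i + 1)
  rw [← hdd] at hb2
  nlinarith

end Vanish

section Analysis

lemma root_bound (s : Multiset ℂ) (R C : ℝ) (hR : 0 < R) (k0 : ℕ)
    (h : ∀ k, k0 ≤ k → ‖(s.map (fun b => b ^ k)).sum‖ ≤ C * R ^ k) (β : ℂ) (hβ : β ∈ s) :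
    ‖β‖ ≤ R := by
  classical
  by_contra! hlt
  set P : ℂ[X] := ∏ γ ∈ s.toFinset.erase β, (X - Polynomial.C γ) with hP
  have hPb : P.eval β ≠ 0 := by
    rw [hP, eval_prod, Finset.prod_ne_zero_iff]
    intro γ hγ
    simp only [eval_sub, eval_X, eval_C, sub_ne_zero]
    exact (Finset.ne_of_mem_erase hγ).symm
  have hPz : ∀ γ ∈ s.toFinset, γ ≠ β → P.eval γ = 0 := by
    intro γ hγ hne
    rw [hP, eval_prod]
    exact Finset.prod_eq_zero (Finset.mem_erase.mpr ⟨hne, hγ⟩) (by simp)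
  have key : ∀ k, (s.count β : ℂ) * (β ^ k * P.eval β) =
      ∑ l ∈ Finset.range (P.natDegree + 1), P.coeff l * (s.map (fun b => b ^ (k + l))).sum := by
    intro k
    have e1 : (s.map (fun b => b ^ k * P.eval b)).sum = (s.count β : ℂ) * (β ^ k * P.eval β) := by
      rw [Finset.sum_multiset_map_count, Finset.sum_eq_single β]
      · simp
      · intro b hb hne
        rw [hPz b hb hne]; simp
      · intro hb
        exact absurd (Multiset.mem_toFinset.mpr hβ) hb
    rw [← e1]
    have e2 : ∀ b : ℂ, b ^ k * P.eval b =
        ∑ l ∈ Finset.range (P.natDegree + 1), P.coeff l * b ^ (k + l) := by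
      intro b
      rw [eval_eq_sum_range, Finset.mul_sum]
      refine Finset.sum_congr rfl fun l _ => ?_
      ring
    simp only [e2]
    rw [Multiset.sum_map_sum]
    refine Finset.sum_congr rfl fun l _ => ?_
    rw [Multiset.sum_map_mul_left]
  set D : ℝ := ∑ l ∈ Finset.range (P.natDegree + 1), ‖P.coeff l‖ * (C * R ^ l) with hD
  have hb : ∀ k, k0 ≤ k → ‖β‖ ^ k * ‖P.eval β‖ ≤ D * R ^ k := by
    intro k hk
    have h1 : ‖(s.count β : ℂ) * (β ^ k * P.eval β)‖ ≤ D * R ^ k := by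
      rw [key k, hD, Finset.sum_mul]
      refine norm_sum_le_of_le _ fun l _ => ?_
      rw [norm_mul, mul_assoc]
      refine mul_le_mul_of_nonneg_left ?_ (norm_nonneg _)
      refine (h (k + l) (by omega)).trans (le_of_eq ?_)
      ring
    rw [norm_mul, norm_mul, norm_pow, Complex.norm_natCast] at h1
    have h2 : (1 : ℝ) ≤ s.count β := by exact_mod_cast Multiset.one_le_count_iff_mem.mpr hβ
    have h3 : 0 ≤ ‖β‖ ^ k * ‖P.eval β‖ := by positivity
    nlinarith
  have hr : 1 < ‖β‖ / R := (one_lt_div hR).mpr hlt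
  have hPpos : 0 < ‖P.eval β‖ := norm_pos_iff.mpr hPb
  obtain ⟨n, hn⟩ := pow_unbounded_of_one_lt (D / ‖P.eval β‖) hr
  have hn' : D / ‖P.eval β‖ < (‖β‖ / R) ^ (n + k0) :=
    hn.trans_le (pow_le_pow_right₀ hr.le (by omega))
  have := hb (n + k0) (by omega)
  rw [div_pow, div_lt_div_iff₀ hPpos (by positivity)] at hn'
  linarith

lemma deriv_prod (s : Multiset ℂ) :
    PowerSeries.derivative ℂ ((s.map (fun a => 1 - PowerSeries.C a * PowerSeries.X)).prod) =
    - (s.map (fun a => 1 - PowerSeries.C a * PowerSeries.X)).prod *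
      PowerSeries.mk (fun k => (s.map (fun a => a ^ (k + 1))).sum) := by
  induction s using Multiset.induction_on with
  | empty =>
    have : (PowerSeries.mk fun k : ℕ => (0 : ℂ)) = 0 := by ext; simp
    simp [this]
  | cons a s ih =>
    have hg : (1 - PowerSeries.C a * PowerSeries.X) * PowerSeries.mk (fun k => a ^ (k + 1)) =
        PowerSeries.C a := by
      ext n
      rw [sub_mul, one_mul, mul_assoc, map_sub, PowerSeries.coeff_C_mul, PowerSeries.coeff_mk]
      cases n with
      | zero => simp
      | succ n =>
        rw [PowerSeries.coeff_succ_X_mul, PowerSeries.coeff_mk, PowerSeries.coeff_C]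
        simp; ring
    have hsplit : PowerSeries.mk (fun k => ((a ::ₘ s).map (fun a => a ^ (k + 1))).sum) =
        PowerSeries.mk (fun k => a ^ (k + 1)) +
          PowerSeries.mk (fun k => (s.map (fun a => a ^ (k + 1))).sum) := by
      ext n; simp
    rw [hsplit, Multiset.map_cons, Multiset.prod_cons, Derivation.leibniz, ih]
    have hd : PowerSeries.derivative ℂ (1 - PowerSeries.C a * PowerSeries.X) = - PowerSeries.C a := by
      rw [map_sub, Derivation.leibniz]
      simp
    rw [hd]
    simp only [smul_eq_mul]
    linear_combination ((s.map (fun a => 1 - PowerSeries.C a * PowerSeries.X)).prod) * hg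

/-- If `L` has constant coefficient 1, it factors as a product of `1 - α X`. -/
lemma factor_one (L : ℂ[X]) (h0 : L.coeff 0 = 1) :
    ∃ s : Multiset ℂ, s.card = L.natDegree ∧
      (L : PowerSeries ℂ) = (s.map (fun a => 1 - PowerSeries.C a * PowerSeries.X)).prod := by
  have hsp := IsAlgClosed.splits L
  refine ⟨L.roots.map (fun r => r⁻¹), ?_, ?_⟩
  · rw [Multiset.card_map, hsp.natDegree_eq_card_roots]
  · have hL := hsp.eq_prod_roots
    have hne : ∀ r ∈ L.roots, r ≠ 0 := by
      intro r hr h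
      subst h
      have := (mem_roots'.mp hr).2
      rw [IsRoot.def, ← coeff_zero_eq_eval_zero, h0] at this
      exact one_ne_zero this
    have key : ∀ t : Multiset ℂ, (∀ r ∈ t, r ≠ 0) → (t.map (fun r => X - C r)).prod =
        C ((t.map (fun r => -r)).prod) * (t.map (fun r => 1 - C r⁻¹ * X)).prod := by
      intro t ht
      rw [← Multiset.prod_hom, Multiset.map_map, ← Multiset.prod_map_mul]
      congr 1
      refine Multiset.map_congr rfl fun r hr => ?_
      have := ht r hr
      have e : (C r : ℂ[X]) * C r⁻¹ = 1 := by rw [← C_mul, mul_inv_cancel₀ this, C_1]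
      simp only [Function.comp, C_neg]
      linear_combination (-X) * e
    rw [key _ hne, ← mul_assoc, ← C_mul] at hL
    set c := L.leadingCoeff * (L.roots.map (fun r => -r)).prod with hc
    have hc1 : c = 1 := by
      have := congrArg (fun P => P.coeff 0) hL
      simp only [h0, coeff_C_mul] at this
      rw [coeff_zero_eq_eval_zero, eval_multiset_prod, Multiset.map_map] at this
      simpa using this.symm
    rw [hc1, C_1, one_mul] at hL
    conv_lhs => rw [hL]
    rw [← coeToPowerSeries.ringHom_apply, ← Multiset.prod_hom, Multiset.map_map, Multiset.map_map]
    congr 1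
    refine Multiset.map_congr rfl fun r _ => ?_
    simp [coeToPowerSeries.ringHom_apply]


lemma acoef_one {F : Type*} [Field F] [Fintype F] [DecidableEq F] (f : F[X]) :
    acoef f 1 = ∑ x : F, quadraticChar F (f.eval x) := by
  symm
  rw [acoef]
  refine Finset.sum_bij (fun c _ => X - C c) ?_ ?_ ?_ ?_
  · intro c _
    rw [mem_MS]
    exact ⟨monic_X_sub_C c, natDegree_X_sub_C c⟩
  · intro a _ b _ h
    simpa using h
  · intro g hg
    rw [mem_MS] at hg
    refine ⟨- g.coeff 0, Finset.mem_univ _, ?_⟩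
    have := hg.1.eq_X_add_C hg.2
    conv_rhs => rw [this]
    simp
  · intro c _
    rw [lam, natDegree_X_sub_C]
    rw [resultant_X_sub_C_left]
    exact le_rfl

lemma weil {F : Type*} [Field F] [Fintype F] [DecidableEq F] (p : ℕ) [Fact p.Prime]
    [CharP F p] (hp2 : p ≠ 2) {f : F[X]} (fm : f.Monic) (hs : f.Separable) (hd : 0 < f.natDegree) :
    |((∑ x : F, quadraticChar F (f.eval x) : ℤ) : ℝ)| ≤
      ((f.natDegree : ℝ) - 1) * Real.sqrt (Fintype.card F) := by
  have hF : ringChar F ≠ 2 := by rw [ringChar.eq F p]; exact hp2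
  obtain ⟨z, hz⟩ := exists_neg p hp2 fm hs hd
  set d := f.natDegree with hdd
  set q := Fintype.card F with hq
  have hq1 : 1 < q := Fintype.one_lt_card
  set L : ℂ[X] := ∑ n ∈ Finset.range d, monomial n ((acoef f n : ℤ) : ℂ) with hL
  have hco : ∀ n, L.coeff n = ((acoef f n : ℤ) : ℂ) := by
    intro n
    rw [hL, finsetSum_coeff]
    simp only [coeff_monomial]
    rw [Finset.sum_ite_eq' (Finset.range d) n]
    split_ifs with h
    · rfl
    · rw [acoef_vanish fm hz (by simpa using h)]; simp
  have h0 : L.coeff 0 = 1 := by rw [hco, acoef_zero]; simp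
  have hdeg : L.natDegree ≤ d - 1 := by
    refine natDegree_le_iff_coeff_eq_zero.mpr fun n hn => ?_
    rw [hco, acoef_vanish fm hz (by omega)]; simp
  obtain ⟨s, hcard, hprod⟩ := factor_one L h0
  have hder := deriv_prod s
  rw [← hprod] at hder
  have hnew : PowerSeries.derivative ℂ (L : PowerSeries ℂ) =
      (L : PowerSeries ℂ) * PowerSeries.mk (fun k => ((Sext p f k : ℤ) : ℂ)) := by
    ext n
    rw [PowerSeries.coeff_derivative, Polynomial.coeff_coe, hco, mul_comm (L : PowerSeries ℂ),
      PowerSeries.coeff_mul, Finset.Nat.sum_antidiagonal_eq_sum_range_succ_mk]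
    have := newton p hF f (n + 1)
    have h2 := congrArg (fun z : ℤ => (z : ℂ)) this
    push_cast at h2
    simp only [PowerSeries.coeff_mk, Polynomial.coeff_coe, hco]
    rw [mul_comm, h2]
  have hLne : (L : PowerSeries ℂ) ≠ 0 := by
    intro h
    have := congrArg (PowerSeries.coeff 0) h
    rw [Polynomial.coeff_coe, h0] at this
    simp at this
  have hS : ∀ k, ((Sext p f k : ℤ) : ℂ) = - (s.map (fun a => a ^ (k + 1))).sum := by
    intro k
    have : PowerSeries.mk (fun k => ((Sext p f k : ℤ) : ℂ)) =
        - PowerSeries.mk (fun k => (s.map (fun a => a ^ (k + 1))).sum) := by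
      apply mul_left_cancel₀ hLne
      rw [← hnew, hder]; ring
    have := congrArg (PowerSeries.coeff k) this
    simpa using this
  have hqR : (1 : ℝ) < q := by exact_mod_cast hq1
  have hroot : ∀ a ∈ s, ‖a‖ ≤ Real.sqrt q := by
    intro a ha
    have h1 := root_bound (s.map (fun a => a ^ 2)) (q : ℝ) (5 * d + 5) (by linarith)
      (4 * (d + 1) + 1) ?_ (a ^ 2) (Multiset.mem_map_of_mem _ ha)
    · rw [norm_pow] at h1
      exact Real.le_sqrt_of_sq_le h1
    · intro k hk
      obtain ⟨i, rfl⟩ : ∃ i, k = i + 1 := ⟨k - 1, by omega⟩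
      rw [Multiset.map_map]
      have h2 := Sext_bound p hp2 fm hs hd i (by
        rw [← hdd, ← hq]
        have := Nat.lt_pow_self hq1 (n := i + 1)
        omega)
      have h3 : (s.map ((fun b : ℂ => b ^ (i + 1)) ∘ fun a => a ^ 2)).sum =
          - ((Sext p f (2 * i + 1) : ℤ) : ℂ) := by
        rw [hS, neg_neg]
        congr 1
        refine Multiset.map_congr rfl fun b _ => ?_
        simp only [Function.comp, ← pow_mul]
        congr 1
      rw [h3, norm_neg, Complex.norm_intCast]
      exact_mod_cast h2
  have e1 : (∑ x : F, quadraticChar F (f.eval x) : ℤ) = Sext p f 0 := by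
    rw [← acoef_one]
    have := newton p hF f 1
    simpa [acoef_zero] using this
  rw [e1]
  have e2 : |((Sext p f 0 : ℤ) : ℝ)| = ‖((Sext p f 0 : ℤ) : ℂ)‖ := by
    rw [Complex.norm_intCast]
  rw [e2, hS 0, norm_neg]
  have e3 : ∀ t : Multiset ℂ, (∀ a ∈ t, ‖a‖ ≤ Real.sqrt q) →
      ‖(t.map (fun a => a ^ (0 + 1))).sum‖ ≤ t.card * Real.sqrt q := by
    intro t
    induction t using Multiset.induction_on with
    | empty => simp
    | cons a t ih =>
      intro h
      have i1 := ih fun b hb => h b (Multiset.mem_cons_of_mem hb)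
      have i2 := h a (Multiset.mem_cons_self a t)
      rw [Multiset.map_cons, Multiset.sum_cons, Multiset.card_cons]
      refine (norm_add_le _ _).trans ?_
      push_cast
      simp only [zero_add, pow_one] at i1 ⊢
      linarith
  refine (e3 s hroot).trans (mul_le_mul_of_nonneg_right ?_ (Real.sqrt_nonneg _))
  have : s.card + 1 ≤ d := by omega
  have : ((s.card + 1 : ℕ) : ℝ) ≤ d := by exact_mod_cast this
  push_cast at this
  linarith

end Analysis

section Final

/-- The eight polynomials of the theorem. -/
noncomputable def fam (F : Type*) [Field F] : Fin 8 → F[X] :=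
  ![X, X + 1, X - 1, X ^ 2 + 1, X ^ 3 + X ^ 2 - 1, X ^ 2 - X + 1, X ^ 2 + X + 1, X ^ 2 + X - 1]

/-- The prescribed quadratic characters. -/
def sgn : Fin 8 → ℤ := ![1, 1, 1, 1, 1, -1, -1, -1]

/-- The degrees of the eight polynomials. -/
def dg : Fin 8 → ℕ := ![1, 1, 1, 2, 3, 2, 2, 2]

lemma fam_monic (F : Type*) [Field F] (i : Fin 8) : (fam F i).Monic := by
  fin_cases i <;> simp only [fam] <;> simp <;> monicity!

lemma fam_natDegree (F : Type*) [Field F] (i : Fin 8) : (fam F i).natDegree = dg i := by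
  fin_cases i <;> simp only [fam, dg] <;> simp <;> compute_degree!

lemma fam_sep (F : Type*) [Field F] (h : (676200 : F) ≠ 0) : (∏ i, fam F i).Separable := by
  have e : ∏ i, fam F i = X ^ 14 + 2 * X ^ 13 + X ^ 12 - X ^ 10 - X ^ 9 - 2 * X ^ 8 - X ^ 7 - X ^ 6
      + X ^ 4 + X ^ 3 + X ^ 2 - X := by
    simp only [fam, Fin.prod_univ_eight]
    simp
    ring
  have e2 : derivative (∏ i, fam F i) = 14 * X ^ 13 + 26 * X ^ 12 + 12 * X ^ 11 - 10 * X ^ 9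
      - 9 * X ^ 8 - 16 * X ^ 7 - 7 * X ^ 6 - 6 * X ^ 5 + 4 * X ^ 3 + 3 * X ^ 2 + 2 * X - 1 := by
    rw [e]
    simp only [derivative_add, derivative_sub, derivative_mul, derivative_X_pow, derivative_X,
      derivative_ofNat, Nat.cast_ofNat, map_ofNat]
    ring
  have key : ((-5210928) * X ^ 0 + (-1911776) * X ^ 1 + (6339911) * X ^ 2 + (26041414) * X ^ 3 + (43418662) * X ^ 4 + (45081808) * X ^ 5 + (50517855) * X ^ 6 + (16017600) * X ^ 7 + (-5600474) * X ^ 8 + (-49336738) * X ^ 9 + (-82163306) * X ^ 10 + (-91740686) * X ^ 11 + (-39029172) * X ^ 12 : F[X]) * (∏ i, fam F i) + ((-676200) * X ^ 0 + (3858528) * X ^ 1 + (2389304) * X ^ 2 + (186777) * X ^ 3 + (-3848629) * X ^ 4 + (-6471624) * X ^ 5 + (-6230688) * X ^ 6 + (-6650351) * X ^ 7 + (-2381254) * X ^ 8 + (-174702) * X ^ 9 + (3852654) * X ^ 10 + (6463574) * X ^ 11 + (6951163) * X ^ 12 + (2787798) * X ^ 13) * derivative (∏ i, fam F i) = 676200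 := by
    rw [e2, e]
    ring
  have hc : (C (676200 : F)⁻¹ : F[X]) * 676200 = 1 := by
    rw [← map_ofNat (C : F →+* F[X]), ← C_mul]
    rw [inv_mul_cancel₀ h, C_1]
  refine ⟨C (676200 : F)⁻¹ * ((-5210928) * X ^ 0 + (-1911776) * X ^ 1 + (6339911) * X ^ 2 + (26041414) * X ^ 3 + (43418662) * X ^ 4 + (45081808) * X ^ 5 + (50517855) * X ^ 6 + (16017600) * X ^ 7 + (-5600474) * X ^ 8 + (-49336738) * X ^ 9 + (-82163306) * X ^ 10 + (-91740686) * X ^ 11 + (-39029172) * X ^ 12), C (676200 : F)⁻¹ * ((-676200) * X ^ 0 + (3858528) * X ^ 1 + (2389304) * X ^ 2 + (186777) * X ^ 3 + (-3848629) * X ^ 4 + (-6471624) * X ^ 5 + (-6230688) * X ^ 6 + (-6650351) * X ^ 7 + (-2381254) * X ^ 8 + (-174702) * X ^ 9 + (3852654) * X ^ 10 + (6463574) * X ^ 11 + (6951163) * X ^ 12 + (2787798) * X ^ 13), ?_⟩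
  rw [mul_assoc, mul_assoc, ← mul_add, key, hc]

lemma num_sum : ∑ T ∈ (Finset.univ : Finset (Fin 8)).powerset.erase ∅, ((∑ i ∈ T, (dg i : ℤ)) - 1)
    = 1537 := by
  decide +kernel

lemma final_aux (F : Type*) [Field F] [Fintype F] [DecidableEq F] (p : ℕ) [Fact p.Prime]
    [CharP F p] (hp2 : p ≠ 2) (h : (676200 : F) ≠ 0) (hbig : 2400000 < Fintype.card F) :
    ∃ a : F, ∀ i, quadraticChar F ((fam F i).eval a) = sgn i := by
  by_contra! hcon
  set q := Fintype.card F with hq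
  set r := Real.sqrt q with hr
  have hr2 : r ^ 2 = q := Real.sq_sqrt (by positivity)
  have hr1 : 1549 ≤ r := by
    refine Real.le_sqrt_of_sq_le ?_
    have : (2400000 : ℝ) < q := by exact_mod_cast hbig
    norm_num
    linarith
  set W : F → ℤ := fun a => ∏ i, (1 + sgn i * quadraticChar F ((fam F i).eval a)) with hW
  have hsgn : ∀ i, sgn i = 1 ∨ sgn i = -1 := by decide
  -- upper bound
  have hup : ∀ a, W a ≤ if (∏ i, fam F i).eval a = 0 then 256 else 0 := by
    intro a
    have hb : ∀ i, 0 ≤ 1 + sgn i * quadraticChar F ((fam F i).eval a) ∧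
        1 + sgn i * quadraticChar F ((fam F i).eval a) ≤ 2 := by
      intro i
      rcases hsgn i with h1 | h1 <;>
      rcases quadraticChar_isQuadratic F ((fam F i).eval a) with h2 | h2 | h2 <;>
        rw [h1, h2] <;> norm_num
    split_ifs with h0
    · calc W a ≤ ∏ i : Fin 8, 2 := Finset.prod_le_prod (fun i _ => (hb i).1) (fun i _ => (hb i).2)
        _ = 256 := by simp
    · obtain ⟨i, hi⟩ := hcon a
      refine le_of_eq (Finset.prod_eq_zero (Finset.mem_univ i) ?_)
      rw [eval_prod, ← ne_eq, Finset.prod_ne_zero_iff] at h0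
      have h3 : quadraticChar F ((fam F i).eval a) ≠ 0 :=
        fun h4 => h0 i (Finset.mem_univ i) (quadraticChar_eq_zero_iff.mp h4)
      rcases hsgn i with h1 | h1 <;>
      rcases quadraticChar_isQuadratic F ((fam F i).eval a) with h2 | h2 | h2 <;>
        first | exact absurd h2 h3 | exact absurd (h2.trans h1.symm) hi | (rw [h1, h2]; norm_num)
  have hmon : (∏ i, fam F i).Monic := monic_prod_of_monic _ _ fun i _ => fam_monic F i
  have hroots : (Finset.univ.filter (fun a : F => (∏ i, fam F i).eval a = 0)).card ≤ 14 := by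
    refine le_trans (Finset.card_le_card (t := (∏ i, fam F i).roots.toFinset) ?_)
      ((Multiset.toFinset_card_le _).trans ((card_roots' _).trans ?_))
    · intro x hx
      rw [Multiset.mem_toFinset, mem_roots hmon.ne_zero]
      exact (Finset.mem_filter.mp hx).2
    · rw [natDegree_prod_of_monic _ _ fun i _ => fam_monic F i]
      simp only [fam_natDegree]
      decide
  have hU : ∑ a, W a ≤ 3584 := by
    refine (Finset.sum_le_sum fun a _ => hup a).trans ?_
    rw [← Finset.sum_filter, Finset.sum_const, nsmul_eq_mul]
    have : ((Finset.univ.filter (fun a : F => (∏ i, fam F i).eval a = 0)).card : ℤ) ≤ 14 := by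
      exact_mod_cast hroots
    linarith
  -- expansion
  have hexp : ∑ a, W a = ∑ T ∈ (Finset.univ : Finset (Fin 8)).powerset,
      (∏ i ∈ T, sgn i) * ∑ a, quadraticChar F ((∏ i ∈ T, fam F i).eval a) := by
    simp only [hW, Finset.prod_one_add]
    rw [Finset.sum_comm]
    refine Finset.sum_congr rfl fun T _ => ?_
    rw [Finset.mul_sum]
    refine Finset.sum_congr rfl fun a _ => ?_
    rw [Finset.prod_mul_distrib, eval_prod, map_prod]
  have hT : ∀ T ∈ (Finset.univ : Finset (Fin 8)).powerset.erase ∅,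
      -((((∑ i ∈ T, (dg i : ℤ)) - 1 : ℤ) : ℝ) * r) ≤
      (((∏ i ∈ T, sgn i) * ∑ a, quadraticChar F ((∏ i ∈ T, fam F i).eval a) : ℤ) : ℝ) := by
    intro T hT
    have hne : T.Nonempty := Finset.nonempty_iff_ne_empty.mpr (Finset.ne_of_mem_erase hT)
    have hm : (∏ i ∈ T, fam F i).Monic := monic_prod_of_monic _ _ fun i _ => fam_monic F i
    have hdeg : (∏ i ∈ T, fam F i).natDegree = ∑ i ∈ T, dg i := by
      rw [natDegree_prod_of_monic _ _ fun i _ => fam_monic F i]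
      simp only [fam_natDegree]
    have hpos : 0 < (∏ i ∈ T, fam F i).natDegree := by
      rw [hdeg]
      refine Finset.sum_pos (fun i _ => ?_) hne
      exact (by decide : ∀ i, 0 < dg i) i
    have hsep : (∏ i ∈ T, fam F i).Separable :=
      (fam_sep F h).of_dvd (Finset.prod_dvd_prod_of_subset _ _ _ (Finset.subset_univ T))
    have hw := weil p hp2 hm hsep hpos
    rw [hdeg] at hw
    have hs : (∏ i ∈ T, sgn i) = 1 ∨ (∏ i ∈ T, sgn i) = -1 := by
      refine Finset.prod_induction _ (fun z : ℤ => z = 1 ∨ z = -1) ?_ (Or.inl rfl)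
        (fun i _ => hsgn i)
      rintro a b (rfl | rfl) (rfl | rfl) <;> norm_num
    have hw2 := abs_le.mp hw
    push_cast at hw2 ⊢
    rcases hs with hs | hs
    · have hs' : (∏ i ∈ T, (sgn i : ℝ)) = 1 := by exact_mod_cast hs
      rw [hs', one_mul]
      linarith [hw2.1]
    · have hs' : (∏ i ∈ T, (sgn i : ℝ)) = -1 := by exact_mod_cast hs
      rw [hs']
      linarith [hw2.2]
  have hsum := Finset.sum_le_sum hT
  rw [Finset.sum_neg_distrib, ← Finset.sum_mul, ← Int.cast_sum, num_sum, ← Int.cast_sum] at hsum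
  rw [← Finset.add_sum_erase _ _ (Finset.empty_mem_powerset _)] at hexp
  have h0 : (∏ i ∈ (∅ : Finset (Fin 8)), sgn i) *
      ∑ a, quadraticChar F ((∏ i ∈ (∅ : Finset (Fin 8)), fam F i).eval a) = q := by
    simp [hq]
  rw [h0] at hexp
  have hfin : ((∑ a, W a : ℤ) : ℝ) ≥ q - 1537 * r := by
    rw [hexp]
    push_cast at hsum ⊢
    linarith
  have hU' : ((∑ a, W a : ℤ) : ℝ) ≤ 3584 := by exact_mod_cast hU
  nlinarith

end Final

end Helpers

/-- For `q ≡ 3 (mod 4)` large, in characteristic `p ∉ {2,3,5,7,23}`, there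
exists `a ∈ F_q` satisfying the square/non-square conditions of Theorem 2.5. -/
theorem exists_good_a_q3mod4 (F : Type*) [Field F] [Fintype F]
    (p q : ℕ) (hp : p.Prime) (hchar : CharP F p)
    (hp2 : p ≠ 2) (hp3 : p ≠ 3) (hp5 : p ≠ 5) (hp7 : p ≠ 7) (hp23 : p ≠ 23)
    (hq : Fintype.card F = q) (h4 : q % 4 = 3) (hbig : 2400000 < q) :
    ∃ a : F, a ≠ -1 ∧ a ≠ 0 ∧ a ≠ 1 ∧
      IsSquare a ∧ IsSquare (a + 1) ∧ IsSquare (a - 1) ∧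
      IsSquare (a ^ 2 + 1) ∧ IsSquare (a ^ 3 + a ^ 2 - 1) ∧
      ¬ IsSquare (a ^ 2 - a + 1) ∧ ¬ IsSquare (a ^ 2 + a + 1) ∧
      ¬ IsSquare (a ^ 2 + a - 1) := by
  classical
  haveI : Fact p.Prime := ⟨hp⟩
  have h : (676200 : F) ≠ 0 := by
    intro h0
    have h1 : ((676200 : ℕ) : F) = 0 := by exact_mod_cast h0
    rw [CharP.cast_eq_zero_iff F p, show 676200 = 2 ^ 3 * 3 * 5 ^ 2 * 7 ^ 2 * 23 by norm_num] at h1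
    simp only [hp.dvd_mul] at h1
    have hh : ∀ {m k : ℕ}, m.Prime → p ∣ m ^ k → p = m := fun hm hd =>
      (Nat.prime_dvd_prime_iff_eq hp hm).mp (hp.dvd_of_dvd_pow hd)
    rcases h1 with (((h1 | h1) | h1) | h1) | h1
    · exact hp2 (hh (by norm_num) h1)
    · exact hp3 (hh (k := 1) (by norm_num) (by simpa using h1))
    · exact hp5 (hh (by norm_num) h1)
    · exact hp7 (hh (by norm_num) h1)
    · exact hp23 (hh (k := 1) (by norm_num) (by simpa using h1))
  obtain ⟨a, ha⟩ := final_aux F p hp2 h (by rw [hq]; exact hbig)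
  have hsq : ∀ y : F, quadraticChar F y = 1 → y ≠ 0 ∧ IsSquare y := by
    intro y hy
    have hy0 : y ≠ 0 := by
      rintro rfl
      simp at hy
    exact ⟨hy0, (quadraticChar_one_iff_isSquare hy0).mp hy⟩
  have hns : ∀ y : F, quadraticChar F y = -1 → ¬ IsSquare y := fun y hy =>
    quadraticChar_neg_one_iff_not_isSquare.mp hy
  have a0 := ha 0
  have a1 := ha 1
  have a2 := ha 2
  have a3 := ha 3
  have a4 := ha 4
  have a5 := ha 5
  have a6 := ha 6
  have a7 := ha 7
  simp [fam, sgn] at a0 a1 a2 a3 a4 a5 a6 a7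
  obtain ⟨n0, s0⟩ := hsq _ a0
  obtain ⟨n1, s1⟩ := hsq _ a1
  obtain ⟨n2, s2⟩ := hsq _ a2
  refine ⟨a, fun h => n1 (by rw [h]; ring), n0, fun h => n2 (by rw [h]; ring), s0, s1, s2,
    (hsq _ a3).2, (hsq _ a4).2, hns _ a5, hns _ a6, hns _ a7⟩
end
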